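/- arXiv:2409.13553 — 4 statements merged into one kernel-verified Lean document; each statement's English description precedes it below -/
import Mathlib

section
/- Let F be a field, n ≥ 1 an integer, and a ∈ F[t] a polynomial with 1 ≤ ord(a) ≤ n. Write s = ord(a). Then the F-linear endomorphism of F[t]/(t^n) given by multiplication by a is nilpotent, and its Jordan type is the almost rectangular partition [n]^s of n into s parts, each equal to ⌈n/s⌉ or ⌊n/s⌋. -/
open Polynomial

noncomputable section

/-- The quotient module `F[t]/(t^m)`. -/
abbrev PQ (F : Type*) [Field F] (m : ℕ) : Type _ := F[X] ⧸ Ideal.span {(X : F[X]) ^ m}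

variable (F : Type*) [Field F]

lemma mulQ_cond (m m' : ℕ) (c : F[X]) (h : (X : F[X]) ^ m' ∣ c * X ^ m) :
    Ideal.span {(X : F[X]) ^ m} ≤
      Submodule.comap (LinearMap.mulLeft F[X] c) (Ideal.span {(X : F[X]) ^ m'}) := by
  rw [Ideal.span_le]
  intro x hx
  rw [Set.mem_singleton_iff] at hx
  subst hx
  simp only [SetLike.mem_coe, Submodule.mem_comap, LinearMap.mulLeft_apply]
  exact Ideal.mem_span_singleton.mpr h

/-- The `F`-linear map `F[t]/(t^m) → F[t]/(t^{m'})` induced by multiplication by the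
polynomial `c`, well-defined whenever `t^{m'} ∣ c · t^m`. -/
def mulQ (m m' : ℕ) (c : F[X]) (h : (X : F[X]) ^ m' ∣ c * X ^ m) :
    PQ F m →ₗ[F] PQ F m' :=
  LinearMap.restrictScalars F
    (Submodule.mapQ (Ideal.span {(X : F[X]) ^ m}) (Ideal.span {(X : F[X]) ^ m'})
      (LinearMap.mulLeft F[X] c) (mulQ_cond F m m' c h))

lemma dvd_A (u : ℕ) (c : F[X]) : (X : F[X]) ^ u ∣ c * X ^ u := Dvd.intro c (mul_comm _ _)

lemma dvd_G (u r : ℕ) (hru : r ≤ u) (g : F[X]) :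
    (X : F[X]) ^ u ∣ (X ^ r * g) * X ^ (u - r) := by
  refine Dvd.intro g ?_
  rw [mul_comm ((X:F[X])^r) g, mul_assoc, ← pow_add, Nat.add_sub_cancel' hru, mul_comm]

lemma dvd_H (u r : ℕ) (h : F[X]) : (X : F[X]) ^ (u - r) ∣ h * X ^ u :=
  Dvd.dvd.mul_left (pow_dvd_pow _ (Nat.sub_le u r)) h

/-- The `F[t]`-module endomorphism of `V = F[t]/(t^u) ⊕ t^r·F[t]/(t^u)` given by
`M(v₁, v₂) = (a v₁ + g v₂, h t^r v₁ + b v₂)`, where the second summand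
`t^r·F[t]/(t^u)` is identified with `F[t]/(t^{u-r})` via `w ↦ t^r w`
(so the lower-left entry becomes `v₁ ↦ h v₁ mod t^{u-r}` and the upper-right
entry becomes `w ↦ t^r g w mod t^u`). -/
def Mmap (u r : ℕ) (hru : r ≤ u) (a g h b : F[X]) :
    (PQ F u × PQ F (u - r)) →ₗ[F] (PQ F u × PQ F (u - r)) :=
  LinearMap.prod
    ((mulQ F u u a (dvd_A F u a)).comp (LinearMap.fst F (PQ F u) (PQ F (u - r))) +
      (mulQ F (u - r) u (X ^ r * g) (dvd_G F u r hru g)).comp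
        (LinearMap.snd F (PQ F u) (PQ F (u - r))))
    ((mulQ F u (u - r) h (dvd_H F u r h)).comp (LinearMap.fst F (PQ F u) (PQ F (u - r))) +
      (mulQ F (u - r) (u - r) b (dvd_A F (u - r) b)).comp
        (LinearMap.snd F (PQ F u) (PQ F (u - r))))

/-- `B` has Jordan type `P` (a partition given as the multiset of its parts):
the corank of every power of `B` is the one prescribed by `P`, i.e.
`dim ker (B^s) = Σ_i min(pᵢ, s)` for all `s ≥ 0`. -/
def JordanTypeIs {V : Type*} [AddCommGroup V] [Module F V] (B : Module.End F V)
    (P : Multiset ℕ) : Prop :=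
  ∀ s : ℕ, Module.finrank F (LinearMap.ker (B ^ s)) = (P.map fun p => min p s).sum

/-- Index type for the `N = 4u-3r-2` coordinates
`(a_1,…,a_{u−1}, b_1,…,b_{u−r−1}, g_0,…,g_{u−r−1}, h_0,…,h_{u−r−1})`. -/
abbrev Vars (u r : ℕ) : Type := Fin (u - 1) ⊕ Fin (u - r - 1) ⊕ Fin (u - r) ⊕ Fin (u - r)

/-- `a = Σ_{i=1}^{u−1} a_i t^i`. -/
def paOf (u r : ℕ) (x : Vars u r → F) : F[X] :=
  ∑ i : Fin (u - 1), C (x (Sum.inl i)) * X ^ ((i : ℕ) + 1)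

/-- `b = Σ_{i=1}^{u−r−1} b_i t^i`. -/
def pbOf (u r : ℕ) (x : Vars u r → F) : F[X] :=
  ∑ i : Fin (u - r - 1), C (x (Sum.inr (Sum.inl i))) * X ^ ((i : ℕ) + 1)

/-- `g = Σ_{i=0}^{u−r−1} g_i t^i`. -/
def pgOf (u r : ℕ) (x : Vars u r → F) : F[X] :=
  ∑ i : Fin (u - r), C (x (Sum.inr (Sum.inr (Sum.inl i)))) * X ^ (i : ℕ)

/-- `h = Σ_{i=0}^{u−r−1} h_i t^i`. -/
def phOf (u r : ℕ) (x : Vars u r → F) : F[X] :=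
  ∑ i : Fin (u - r), C (x (Sum.inr (Sum.inr (Sum.inr i)))) * X ^ (i : ℕ)

/-- The nilpotent endomorphism `M_x` of `V` determined by the point `x ∈ F^N`. -/
def Mx (u r : ℕ) (hru : r ≤ u) (x : Vars u r → F) :
    Module.End F (PQ F u × PQ F (u - r)) :=
  Mmap F u r hru (paOf F u r x) (pgOf F u r x) (phOf F u r x) (pbOf F u r x)

/-- The variable `a_i` as a polynomial function on `F^N` (meaningful for `1 ≤ i ≤ u-1`). -/
def Av (u r : ℕ) (i : ℕ) : MvPolynomial (Vars u r) F :=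
  if h : i - 1 < u - 1 then MvPolynomial.X (Sum.inl ⟨i - 1, h⟩) else 0

/-- The variable `b_i` as a polynomial function on `F^N` (meaningful for `1 ≤ i ≤ u-r-1`). -/
def Bv (u r : ℕ) (i : ℕ) : MvPolynomial (Vars u r) F :=
  if h : i - 1 < u - r - 1 then MvPolynomial.X (Sum.inr (Sum.inl ⟨i - 1, h⟩)) else 0

/-- The variable `g_i` as a polynomial function on `F^N` (meaningful for `0 ≤ i ≤ u-r-1`). -/
def Gv (u r : ℕ) (i : ℕ) : MvPolynomial (Vars u r) F :=
  if h : i < u - r then MvPolynomial.X (Sum.inr (Sum.inr (Sum.inl ⟨i, h⟩))) else 0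

/-- The variable `h_i` as a polynomial function on `F^N` (meaningful for `0 ≤ i ≤ u-r-1`). -/
def Hv (u r : ℕ) (i : ℕ) : MvPolynomial (Vars u r) F :=
  if h : i < u - r then MvPolynomial.X (Sum.inr (Sum.inr (Sum.inr ⟨i, h⟩))) else 0

/-- The set of polynomials `E^Q_{k,l}` for `Q = (u, u-r)`:
`{a_1,…,a_{k−1}, b_1,…,b_{l−1}}` if `k+l ≤ r`, and
`{a_1,…,a_{k−1}, b_1,…,b_{r−k−1}}` together with the quadratic polynomials
`Σ_{j=0}^{m} a_{k+j} b_{r−k+m−j} − Σ_{j=0}^{m} g_j h_{m−j}` for `0 ≤ m ≤ k+l−r−1`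
if `k+l ≥ r+1`. -/
def Eset (u r k l : ℕ) : Set (MvPolynomial (Vars u r) F) :=
  if k + l ≤ r then
    {p | ∃ i, 1 ≤ i ∧ i ≤ k - 1 ∧ p = Av F u r i} ∪
      {p | ∃ i, 1 ≤ i ∧ i ≤ l - 1 ∧ p = Bv F u r i}
  else
    {p | ∃ i, 1 ≤ i ∧ i ≤ k - 1 ∧ p = Av F u r i} ∪
      {p | ∃ i, 1 ≤ i ∧ i ≤ r - k - 1 ∧ p = Bv F u r i} ∪
      {p | ∃ m, m ≤ k + l - r - 1 ∧ p =
        (∑ j ∈ Finset.range (m + 1), Av F u r (k + j) * Bv F u r (r - k + m - j)) -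
          (∑ j ∈ Finset.range (m + 1), Gv F u r j * Hv F u r (m - j))}

/-- The common zero locus in `F^N` of a set `T` of polynomials. -/
def zLocus (u r : ℕ) (T : Set (MvPolynomial (Vars u r) F)) : Set (Vars u r → F) :=
  {x | ∀ p ∈ T, MvPolynomial.eval x p = 0}

/-- `X^Q_{k,l}`, the common zero locus of `E^Q_{k,l}`. -/
def Xlocus (u r k l : ℕ) : Set (Vars u r → F) := zLocus F u r (Eset F u r k l)

/-- Zariski-closed subsets of `F^N`: common zero loci of sets of polynomials. -/
def IsZClosed (u r : ℕ) (S : Set (Vars u r → F)) : Prop :=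
  ∃ T : Set (MvPolynomial (Vars u r) F), S = zLocus F u r T

/-- The Zariski closure of a subset of `F^N`. -/
def zClosure (u r : ℕ) (S : Set (Vars u r → F)) : Set (Vars u r → F) :=
  ⋂₀ {C | IsZClosed F u r C ∧ S ⊆ C}

end

section Burge

/-- Scanning the frequency sequence `f` downward from `j`, forming backward pairs:
whenever `f j > 0` (and `j` has not been consumed by a previously formed pair),
put `j` in the set and consume the index `j - 1`. -/
def RsetGo (f : ℕ → ℕ) : ℕ → Finset ℕ
  | 0 => ∅
  | 1 => if 0 < f 1 then {1} else ∅
  | (j + 2) => if 0 < f (j + 2) then insert (j + 2) (RsetGo f j) else RsetGo f (j + 1)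

/-- The set `R(P)` of a partition `P` (given as the multiset of its parts, with
frequency sequence `j ↦ P.count j`); the scan starts at the largest part `P.sup`. -/
def Rset (P : Multiset ℕ) : Finset ℕ := RsetGo (fun j => P.count j) P.sup

/-- The partition `∂P`: for each `j ∈ R(P)` one copy of the part `j` is replaced by
`j - 1` (discarded when `j - 1 = 0`). -/
def dP (P : Multiset ℕ) : Multiset ℕ :=
  (P - (Rset P).val) + (((Rset P).val.map fun j => j - 1).filter fun j => 0 < j)

/-- Fuel-driven computation of the Burge code; `false` stands for `α`, `true` for `β`.
(The fuel `P.sum + 1` used in `burgeCode` always suffices, since `∂` strictly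
decreases the size of a nonempty partition.) -/
def burgeGo : ℕ → Multiset ℕ → List Bool
  | 0, _ => []
  | (n + 1), P =>
    if P = 0 then [false]
    else (if 1 ∈ Rset P then true else false) :: burgeGo n (dP P)

/-- The Burge code of the partition `P`: the word `w_1 ⋯ w_m` with `w_i = β` (`true`)
if `∂^{i-1} P` is in class `B` (i.e. `1 ∈ R(∂^{i-1}P)`) and `w_i = α` (`false`)
otherwise, where `m = min { i : ∂^{i-1} P = (0) }`. -/
def burgeCode (P : Multiset ℕ) : List Bool := burgeGo (P.sum + 1) P

/-- The almost rectangular partition `[m]^k` of `m` into `k` parts, each equal to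
`⌈m/k⌉` or `⌊m/k⌋`. -/
def arPart (m k : ℕ) : Multiset ℕ :=
  Multiset.replicate (m % k) (m / k + 1) + Multiset.replicate (k - m % k) (m / k)

/-- Greedy decomposition of a weakly decreasing list of parts into maximal
almost rectangular segments from the top (fuel-driven helper). -/
def greedyGo : ℕ → List ℕ → List (List ℕ)
  | 0, _ => []
  | _ + 1, [] => []
  | n + 1, p :: rest =>
    ((p :: rest).takeWhile fun q => decide (p ≤ q + 1)) ::
      greedyGo n ((p :: rest).dropWhile fun q => decide (p ≤ q + 1))

/-- The greedy decomposition of a weakly decreasing list of parts into maximal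
almost rectangular subpartitions from the top. -/
def greedy (l : List ℕ) : List (List ℕ) := greedyGo l.length l

end Burge


/-!
Multiplication by `a` on `F[t]/(t^n)` has `j`-th power multiplication by `a^j`, and an endomorphism
of a finite-dimensional space has kernel and cokernel of the same dimension. The cokernel of
multiplication by `a^j` is `F[t]/(t^n, a^j)`. Writing `a = t^s c` with `c` prime to `t`, the ideal
`(t^n, a^j)` is generated by `t^(min n (s j))`, so the kernel has dimension `min n (s j)`. This is
also `∑ min(p_i, j)` over the parts `p_i` of `[n]^s`.
-/

section Ideals

variable {R : Type*} [CommSemiring R]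

lemma span_pow_sup_span_pow (x : R) (m n : ℕ) :
    Ideal.span {x ^ m} ⊔ Ideal.span {x ^ n} = Ideal.span {x ^ min m n} := by
  rcases le_total m n with hmn | hnm
  · rw [min_eq_left hmn, sup_eq_left, Ideal.span_singleton_le_span_singleton]
    exact pow_dvd_pow x hmn
  · rw [min_eq_right hnm, sup_eq_right, Ideal.span_singleton_le_span_singleton]
    exact pow_dvd_pow x hnm

lemma span_pow_sup_span_pow_mul {x c : R} (hxc : IsCoprime x c) (m n : ℕ) :
    Ideal.span {x ^ m} ⊔ Ideal.span {x ^ n * c} = Ideal.span {x ^ min m n} := by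
  have hc : Ideal.span {x ^ m} ⊔ Ideal.span {c} = ⊤ :=
    ((Ideal.isCoprime_span_singleton_iff _ _).2 hxc.pow_left).sup_eq
  rw [← Ideal.span_singleton_mul_span_singleton, Ideal.sup_mul_eq_of_coprime_right hc,
    span_pow_sup_span_pow]

end Ideals

section LinearAlgebra

variable (K : Type*) {A : Type*} [Field K] [CommRing A] [Algebra K A]

lemma finrank_ker_mulLeft_eq_finrank_quotient_span [Module.Finite K A] (b : A) :
    Module.finrank K (LinearMap.ker (LinearMap.mulLeft K b)) =
      Module.finrank K (A ⧸ Ideal.span {b}) := by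
  have hrange : LinearMap.range (LinearMap.mulLeft K b) =
      (Ideal.span {b}).restrictScalars K := by
    ext x
    simp [Ideal.mem_span_singleton', mul_comm]
  have hker := LinearMap.finrank_range_add_finrank_ker (LinearMap.mulLeft K b)
  have hcoker := Submodule.finrank_quotient_add_finrank ((Ideal.span {b}).restrictScalars K)
  rw [hrange] at hker
  change Module.finrank K (A ⧸ Ideal.span {b}) + _ = _ at hcoker
  omega

lemma finrank_ker_mulLeft_mk (I : Ideal A) [Module.Finite K (A ⧸ I)] (b : A) :
    Module.finrank K (LinearMap.ker (LinearMap.mulLeft K (Ideal.Quotient.mk I b))) =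
      Module.finrank K (A ⧸ I ⊔ Ideal.span {b}) := by
  rw [finrank_ker_mulLeft_eq_finrank_quotient_span, ← Set.image_singleton, ← Ideal.map_span]
  exact (DoubleQuot.quotQuotEquivQuotSupₐ K I (Ideal.span {b})).toLinearEquiv.finrank_eq

end LinearAlgebra

lemma sum_map_min_arPart {s : ℕ} (hs : 0 < s) (n j : ℕ) :
    ((arPart n s).map fun p => min p j).sum = min n (s * j) := by
  have hmod : n % s < s := Nat.mod_lt n hs
  have hdiv : n % s + s * (n / s) = n := Nat.mod_add_div n s
  have hsum : ((arPart n s).map fun p => min p j).sum =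
      n % s * min (n / s + 1) j + (s - n % s) * min (n / s) j := by
    simp only [arPart, Multiset.map_add, Multiset.map_replicate, Multiset.sum_add,
      Multiset.sum_replicate, smul_eq_mul]
  rw [hsum]
  rcases le_or_gt j (n / s) with hj | hj
  · have hle : s * j ≤ n := (Nat.mul_le_mul_left s hj).trans (by omega)
    rw [min_eq_right hj, min_eq_right (by omega), min_eq_right hle, ← add_mul,
      Nat.add_sub_cancel' hmod.le]
  · have hle : n ≤ s * j := by
      have := Nat.mul_le_mul_left s hj
      rw [Nat.mul_succ] at this
      omega
    rw [min_eq_left hj.le, min_eq_left hj, min_eq_left hle]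
    calc n % s * (n / s + 1) + (s - n % s) * (n / s)
        = n % s + (n % s + (s - n % s)) * (n / s) := by ring
      _ = n := by rw [Nat.add_sub_cancel' hmod.le, hdiv]

section TruncatedPolynomials

variable {F : Type*} [Field F]

lemma exists_isCoprime_eq_X_pow_natTrailingDegree_mul {a : F[X]} (ha : a ≠ 0) :
    ∃ c : F[X], IsCoprime X c ∧ a = X ^ a.natTrailingDegree * c := by
  obtain ⟨c, hac, hc⟩ := exists_eq_pow_rootMultiplicity_mul_and_not_dvd a ha 0
  rw [C_0, sub_zero] at hac hc
  rw [rootMultiplicity_eq_natTrailingDegree'] at hac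
  exact ⟨c, irreducible_X.coprime_iff_not_dvd.2 hc, hac⟩

lemma span_X_pow_sup_span_pow_of_ne_zero {a : F[X]} (ha : a ≠ 0) (n j : ℕ) :
    Ideal.span {(X : F[X]) ^ n} ⊔ Ideal.span {a ^ j} =
      Ideal.span {X ^ min n (a.natTrailingDegree * j)} := by
  obtain ⟨c, hc, hac⟩ := exists_isCoprime_eq_X_pow_natTrailingDegree_mul ha
  rw [← span_pow_sup_span_pow_mul (hc.pow_right (n := j)), pow_mul, ← mul_pow, ← hac]

lemma finrank_quotient_span_X_pow (m : ℕ) :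
    Module.finrank F (F[X] ⧸ Ideal.span {(X : F[X]) ^ m}) = m := by
  rw [finrank_quotient_span_eq_natDegree, natDegree_X_pow]

lemma mulQ_self_eq_mulLeft (n : ℕ) (a : F[X]) :
    mulQ F n n a (dvd_A F n a) = LinearMap.mulLeft F (Ideal.Quotient.mk _ a) := by
  refine LinearMap.ext fun x => ?_
  obtain ⟨f, rfl⟩ := Ideal.Quotient.mk_surjective x
  rfl

lemma mulQ_self_pow (n : ℕ) (a : F[X]) (j : ℕ) :
    (mulQ F n n a (dvd_A F n a) : Module.End F (PQ F n)) ^ j =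
      LinearMap.mulLeft F (Ideal.Quotient.mk _ (a ^ j)) := by
  rw [mulQ_self_eq_mulLeft, LinearMap.pow_mulLeft, map_pow]

lemma isNilpotent_mulQ_self {a : F[X]} (ha : X ∣ a) (n : ℕ) :
    IsNilpotent (mulQ F n n a (dvd_A F n a) : Module.End F (PQ F n)) := by
  rw [mulQ_self_eq_mulLeft, LinearMap.isNilpotent_mulLeft_iff]
  refine ⟨n, ?_⟩
  rw [← map_pow, Ideal.Quotient.eq_zero_iff_dvd]
  exact pow_dvd_pow_of_dvd ha n

lemma finrank_ker_mulQ_self_pow {a : F[X]} (ha : a ≠ 0) (n j : ℕ) :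
    Module.finrank F
        (LinearMap.ker ((mulQ F n n a (dvd_A F n a) : Module.End F (PQ F n)) ^ j)) =
      min n (a.natTrailingDegree * j) := by
  have : Module.Finite F (PQ F n) := (monic_X_pow n).finite_quotient
  rw [mulQ_self_pow, finrank_ker_mulLeft_mk, span_X_pow_sup_span_pow_of_ne_zero ha,
    finrank_quotient_span_X_pow]

lemma jordanTypeIs_mulQ_self {a : F[X]} (ha : 0 < a.natTrailingDegree) (n : ℕ) :
    JordanTypeIs F (mulQ F n n a (dvd_A F n a) : Module.End F (PQ F n))
      (arPart n a.natTrailingDegree) := by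
  have ha0 : a ≠ 0 := by
    rintro rfl
    simp at ha
  intro j
  rw [finrank_ker_mulQ_self_pow ha0, sum_map_min_arPart ha]

end TruncatedPolynomials

/-- For a polynomial `a` with `1 ≤ ord(a) ≤ n`, multiplication by `a`
on `F[t]/(t^n)` is nilpotent, with Jordan type the almost rectangular partition
`[n]^{ord a}`. -/
theorem statement14 (F : Type*) [Field F] (n : ℕ) (hn : 1 ≤ n) (a : Polynomial F)
    (h1 : 1 ≤ a.trailingDegree) (h2 : a.trailingDegree ≤ (n : ℕ∞)) :
    IsNilpotent ((mulQ F n n a (dvd_A F n a)) : Module.End F (PQ F n)) ∧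
      JordanTypeIs F ((mulQ F n n a (dvd_A F n a)) : Module.End F (PQ F n))
        (arPart n a.natTrailingDegree) := by
  have ha : a ≠ 0 := by
    rintro rfl
    simp at h2
  have hs : 0 < a.natTrailingDegree := by
    rw [trailingDegree_eq_natTrailingDegree ha] at h1
    exact_mod_cast h1
  have hX : X ∣ a := X_dvd_iff.2 (coeff_eq_zero_of_lt_natTrailingDegree hs)
  exact ⟨isNilpotent_mulQ_self hX n, jordanTypeIs_mulQ_self hs n⟩
end

section
/- Let F be a field and let Q = (q_1 > q_2 > ⋯ > q_ℓ) be a stable partition of n, i.e., q_i − q_{i+1} ≥ 2 for all 1 ≤ i ≤ ℓ−1. Let J_Q ∈ M_n(F) be the nilpotent Jordan matrix with blocks of sizes q_1,…,q_ℓ. Then the set { B ∈ M_n(F) : B·J_Q = J_Q·B and B is nilpotent } is an F-linear subspace of M_n(F) (it is closed under addition and scalar multiplication and contains 0). -/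
open Polynomial

/-- The nilpotent Jordan matrix with blocks of sizes `q 0, …, q (ℓ-1)`:
the entry at `((i,a),(j,b))` is `1` if `i = j` and `b = a + 1`, and `0` otherwise. -/
def jordanMatrix (F : Type*) [Field F] {n : ℕ} (q : Fin n → ℕ) :
    Matrix ((i : Fin n) × Fin (q i)) ((i : Fin n) × Fin (q i)) F :=
  fun x y => if x.1 = y.1 ∧ (x.2 : ℕ) + 1 = (y.2 : ℕ) then 1 else 0

/-!
In the Jordan basis, `J` moves each vector one step towards the start of its block, so `ker Jᵏ` and
`im Jᵏ` are spanned by the basis vectors within a given distance of the start, respectively at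
least a given distance from the end, of their blocks. A matrix `B` commuting with `J` preserves all
of these subspaces, hence is triangular for any order of the basis refining the two distances. When
the blocks have distinct sizes, the two distances determine a basis vector, so the triangularity is
genuine, and `B` is nilpotent exactly when its diagonal vanishes: a linear condition.
-/

section Triangular

variable {m α R : Type*} [Fintype m] [DecidableEq m] [LinearOrder α] [CommRing R]
  {M : Matrix m m R} {b : m → α}

theorem charpoly_of_blockTriangular_of_injective (hM : M.BlockTriangular b)
    (hb : Function.Injective b) : M.charpoly = ∏ i, (X - C (M i i)) := by
  let : LinearOrder m := LinearOrder.lift' b hb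
  convert M.charpoly_of_isUpperTriangular hM

theorem isNilpotent_iff_diag_eq_zero_of_blockTriangular [IsReduced R]
    (hM : M.BlockTriangular b) (hb : Function.Injective b) :
    IsNilpotent M ↔ M.diag = 0 := by
  have hchar := charpoly_of_blockTriangular_of_injective hM hb
  constructor
  · intro hnil
    ext i
    have hroot : M.charpoly.eval (M i i) = 0 := by
      rw [hchar, eval_prod]
      exact Finset.prod_eq_zero (Finset.mem_univ i) (by simp)
    have hpow : IsNilpotent (M i i ^ Fintype.card m) := by
      simpa [hroot] using (Matrix.isNilpotent_charpoly_sub_pow_of_isNilpotent hnil).map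
        (evalRingHom (M i i))
    exact eq_zero_of_pow_eq_zero hpow.eq_zero
  · intro hdiag
    have hentry (i : m) : M i i = 0 := congr_fun hdiag i
    have hX : M.charpoly = X ^ Fintype.card m := by simp [hchar, hentry]
    exact ⟨Fintype.card m, by simpa [hX] using M.aeval_self_charpoly⟩

end Triangular

section JordanCommutant

variable {F : Type*} [Field F] {n : ℕ} {q : Fin n → ℕ}

theorem jordanMatrix_mul_apply {κ : Type*} (B : Matrix ((i : Fin n) × Fin (q i)) κ F)
    (x : (i : Fin n) × Fin (q i)) (y : κ) :
    (jordanMatrix F q * B) x y =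
      if h : (x.2 : ℕ) + 1 < q x.1 then B ⟨x.1, x.2 + 1, h⟩ y else 0 := by
  obtain ⟨i, a⟩ := x
  rw [Matrix.mul_apply]
  split_ifs with h
  · rw [Finset.sum_eq_single ⟨i, a + 1, h⟩ _ (by simp)]
    · simp [jordanMatrix]
    · rintro ⟨j, b⟩ - hne
      have hshift : ¬(i = j ∧ (a : ℕ) + 1 = b) := by rintro ⟨rfl, hb⟩; simp [hb] at hne
      simp [jordanMatrix, hshift]
  · refine Finset.sum_eq_zero ?_
    rintro ⟨j, b⟩ -
    have hshift : ¬(i = j ∧ (a : ℕ) + 1 = b) := by rintro ⟨rfl, hb⟩; exact h (hb ▸ b.isLt)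
    simp [jordanMatrix, hshift]

theorem mul_jordanMatrix_apply {κ : Type*} (B : Matrix κ ((i : Fin n) × Fin (q i)) F)
    (x : κ) (y : (i : Fin n) × Fin (q i)) :
    (B * jordanMatrix F q) x y =
      if 1 ≤ (y.2 : ℕ) then B x ⟨y.1, y.2 - 1, by lia⟩ else 0 := by
  obtain ⟨j, b⟩ := y
  rw [Matrix.mul_apply]
  split_ifs with h
  · rw [Finset.sum_eq_single ⟨j, b - 1, by lia⟩ _ (by simp)]
    · simp [jordanMatrix, Nat.sub_add_cancel h]
    · rintro ⟨i, a⟩ - hne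
      have hshift : ¬(i = j ∧ (a : ℕ) + 1 = b) := by rintro ⟨rfl, ha⟩; simp [← ha] at hne
      simp [jordanMatrix, hshift]
  · refine Finset.sum_eq_zero ?_
    rintro ⟨i, a⟩ -
    have hshift : ¬(i = j ∧ (a : ℕ) + 1 = b) := by lia
    simp [jordanMatrix, hshift]

theorem jordanMatrix_pow_mul_apply {κ : Type*} (B : Matrix ((i : Fin n) × Fin (q i)) κ F) (k : ℕ)
    (x : (i : Fin n) × Fin (q i)) (y : κ) :
    (jordanMatrix F q ^ k * B) x y =
      if h : (x.2 : ℕ) + k < q x.1 then B ⟨x.1, x.2 + k, h⟩ y else 0 := by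
  induction k generalizing B with
  | zero => simp
  | succ k ih =>
    rw [pow_succ, Matrix.mul_assoc, ih]
    simp only [jordanMatrix_mul_apply, add_assoc]
    grind

theorem mul_jordanMatrix_pow_apply {κ : Type*} (B : Matrix κ ((i : Fin n) × Fin (q i)) F) (k : ℕ)
    (x : κ) (y : (i : Fin n) × Fin (q i)) :
    (B * jordanMatrix F q ^ k) x y =
      if k ≤ (y.2 : ℕ) then B x ⟨y.1, y.2 - k, by lia⟩ else 0 := by
  induction k generalizing B with
  | zero => simp
  | succ k ih =>
    rw [pow_succ', ← Matrix.mul_assoc, ih]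
    simp only [mul_jordanMatrix_apply]
    grind

variable {B : Matrix ((i : Fin n) × Fin (q i)) ((i : Fin n) × Fin (q i)) F}

theorem position_le_of_commute_jordanMatrix (hB : Commute B (jordanMatrix F q))
    {x y : (i : Fin n) × Fin (q i)} (hxy : B x y ≠ 0) : (x.2 : ℕ) ≤ y.2 := by
  obtain ⟨i, a⟩ := x
  by_contra! hlt
  refine hxy ?_
  calc
    B ⟨i, a⟩ y = (jordanMatrix F q ^ (a : ℕ) * B) ⟨i, 0, by lia⟩ y := by
      simp [jordanMatrix_pow_mul_apply]
    _ = (B * jordanMatrix F q ^ (a : ℕ)) ⟨i, 0, by lia⟩ y := by rw [(hB.pow_right a).eq]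
    _ = 0 := by rw [mul_jordanMatrix_pow_apply, if_neg hlt.not_ge]

theorem position_sub_size_le_of_commute_jordanMatrix (hB : Commute B (jordanMatrix F q))
    {x y : (i : Fin n) × Fin (q i)} (hxy : B x y ≠ 0) :
    (x.2 : ℤ) - q x.1 ≤ y.2 - q y.1 := by
  obtain ⟨j, b, hb⟩ := y
  obtain ⟨k, hk⟩ := Nat.exists_eq_add_of_lt hb
  by_contra! hlt
  refine hxy ?_
  calc
    B x ⟨j, b, hb⟩ = (B * jordanMatrix F q ^ k) x ⟨j, b + k, by lia⟩ := by
      simp [mul_jordanMatrix_pow_apply]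
    _ = (jordanMatrix F q ^ k * B) x ⟨j, b + k, by lia⟩ := by rw [(hB.pow_right k).eq]
    _ = 0 := by rw [jordanMatrix_pow_mul_apply, dif_neg (by simp only at hlt; omega)]

/-- The position `(a, a - qᵢ)` of the `a`-th basis vector `e` of the `i`-th Jordan block `J`,
measured from both ends of the block and ordered lexicographically. The first entry is the largest
`k` with `Jᵏ e ≠ 0`; the second is minus the least `k` with `e ∉ im Jᵏ`, the sign making both
entries increase along the block. -/
def jordanLevel (q : Fin n → ℕ) (x : (i : Fin n) × Fin (q i)) : ℕ ×ₗ ℤ :=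
  toLex ((x.2 : ℕ), (x.2 : ℤ) - q x.1)

theorem jordanLevel_injective (hq : Function.Injective q) :
    Function.Injective (jordanLevel q) := by
  rintro ⟨i, a⟩ ⟨j, b⟩ h
  obtain ⟨hab, hsize⟩ := Prod.mk.inj (toLex.injective h)
  obtain rfl : i = j := hq (by simp only at hab hsize; omega)
  simp_all [Fin.ext_iff]

theorem blockTriangular_of_commute_jordanMatrix (hB : Commute B (jordanMatrix F q)) :
    B.BlockTriangular (jordanLevel q) := by
  intro x y hlt
  by_contra hxy
  refine hlt.not_ge (Prod.Lex.toLex_mono ⟨?_, ?_⟩)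
  · exact position_le_of_commute_jordanMatrix hB hxy
  · exact position_sub_size_le_of_commute_jordanMatrix hB hxy

theorem isNilpotent_iff_diag_eq_zero_of_commute_jordanMatrix (hq : Function.Injective q)
    (hB : Commute B (jordanMatrix F q)) : IsNilpotent B ↔ B.diag = 0 :=
  isNilpotent_iff_diag_eq_zero_of_blockTriangular
    (blockTriangular_of_commute_jordanMatrix hB) (jordanLevel_injective hq)

end JordanCommutant

theorem statement15_general (F : Type*) [Field F] {n : ℕ} {q : Fin n → ℕ}
    (hq : Function.Injective q) :
    ∃ S : Submodule F (Matrix ((i : Fin n) × Fin (q i)) ((i : Fin n) × Fin (q i)) F),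
      (S : Set (Matrix ((i : Fin n) × Fin (q i)) ((i : Fin n) × Fin (q i)) F)) =
        {B | B * jordanMatrix F q = jordanMatrix F q * B ∧ IsNilpotent B} := by
  refine ⟨(Subalgebra.centralizer F {jordanMatrix F q}).toSubmodule ⊓
    LinearMap.ker (Matrix.diagLinearMap _ F F), ?_⟩
  ext B
  have hcentralizer : B ∈ Subalgebra.centralizer F {jordanMatrix F q} ↔
      Commute B (jordanMatrix F q) := by
    simp [Subalgebra.mem_centralizer_iff, Commute, SemiconjBy, eq_comm]
  simp only [Submodule.coe_inf, Set.mem_inter_iff, SetLike.mem_coe, Subalgebra.mem_toSubmodule,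
    LinearMap.mem_ker, hcentralizer]
  exact and_congr_right fun hB =>
    (isNilpotent_iff_diag_eq_zero_of_commute_jordanMatrix hq hB).symm

/-- For a stable partition `Q` (parts pairwise differing by at least 2),
the set of nilpotent matrices commuting with the Jordan matrix `J_Q` is an `F`-linear
subspace of the matrix algebra. -/
theorem statement15 (F : Type*) [Field F] (n : ℕ) (q : Fin n → ℕ)
    (hpos : ∀ i, 1 ≤ q i) (hstable : ∀ i j : Fin n, i < j → q j + 2 ≤ q i) :
    ∃ S : Submodule F (Matrix ((i : Fin n) × Fin (q i)) ((i : Fin n) × Fin (q i)) F),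
      (S : Set (Matrix ((i : Fin n) × Fin (q i)) ((i : Fin n) × Fin (q i)) F)) =
        {B | B * jordanMatrix F q = jordanMatrix F q * B ∧ IsNilpotent B} := by
  have hanti : StrictAnti q := fun i j hij => by have := hstable i j hij; lia
  exact statement15_general F hanti.injective
end

section
/- Let F be an infinite field, let u > r ≥ 2 be integers, and let 1 ≤ k, k′ ≤ r−1 and 1 ≤ l, l′ ≤ u−r. Then X^Q_{k′,l′} ⊆ X^Q_{k,l} (equivalently, every point of F^N at which all polynomials of E^Q_{k′,l′} vanish also annihilates all polynomials of E^Q_{k,l}) if and only if either (k = k′ and l ≤ l′), or (k ≤ k′ and l ≤ l′ and k′ + l ≤ r). -/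
open Polynomial

/-!
A point of `F^N` is a quadruple of truncated polynomials `(a, b, g, h)`, and `X^Q_{k,l}` consists
of the points with `t^k ∣ a`, `t^{min(l, r-k)} ∣ b` and `t^{k+l} ∣ ab - t^r gh`: the quadratic
polynomials in `E^Q_{k,l}` are the coefficients of this determinant at `t^r, …, t^{k+l-1}`, the
lower ones being killed by the first two conditions. Hence larger exponents cut out smaller loci,
and the points `(t^n, 0, 0, 0)`, `(0, t^n, 0, 0)` and `(0, 0, t^n, 1)` detect the three exponents
separately.
-/

section Coefficients

variable {R : Type*}

lemma coeff_sum_C_mul_X_pow_add [Semiring R] {n : ℕ} (c : Fin n → R) (d i : ℕ) :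
    (∑ j : Fin n, C (c j) * X ^ ((j : ℕ) + d)).coeff (i + d) =
      if h : i < n then c ⟨i, h⟩ else 0 := by
  simp only [finsetSum_coeff, coeff_C_mul_X_pow, Nat.add_right_cancel_iff]
  split_ifs with h
  · rw [Finset.sum_eq_single ⟨i, h⟩]
    · simp
    · intro j _ hj
      exact if_neg fun hij => hj (Fin.ext hij.symm)
    · simp
  · exact Finset.sum_eq_zero fun j _ => if_neg (by omega)

lemma sum_C_coeff_mul_X_pow_add [Semiring R] {n d : ℕ} {p : R[X]} (hd : X ^ d ∣ p)
    (hp : p.degree < (n + d : ℕ)) :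
    ∑ j : Fin n, C (p.coeff ((j : ℕ) + d)) * X ^ ((j : ℕ) + d) = p := by
  ext i
  rcases lt_or_ge i d with hid | hid
  · rw [finsetSum_coeff, X_pow_dvd_iff.1 hd i hid]
    refine Finset.sum_eq_zero fun j _ => ?_
    rw [coeff_C_mul_X_pow, if_neg (by omega)]
  · obtain ⟨i, rfl⟩ := Nat.exists_eq_add_of_le' hid
    rw [coeff_sum_C_mul_X_pow_add (fun j : Fin n => p.coeff ((j : ℕ) + d))]
    split_ifs with hin
    · rfl
    · have hle : n + d ≤ i + d := by omega
      exact (coeff_eq_zero_of_degree_lt (hp.trans_le (by exact_mod_cast hle))).symm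

lemma coeff_X_pow_mul_add [Semiring R] (p : R[X]) (n i : ℕ) :
    (X ^ n * p).coeff (n + i) = p.coeff i := by
  rw [add_comm, coeff_X_pow_mul]

lemma coeff_mul_eq_sum_range [Semiring R] (p q : R[X]) (m : ℕ) :
    (p * q).coeff m = ∑ j ∈ Finset.range (m + 1), p.coeff j * q.coeff (m - j) := by
  rw [coeff_mul, Finset.Nat.sum_antidiagonal_eq_sum_range_succ_mk]

lemma coeff_mul_of_X_pow_dvd [Semiring R] {a b : R[X]} {p q : ℕ}
    (ha : X ^ p ∣ a) (hb : X ^ q ∣ b) (m : ℕ) :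
    (a * b).coeff (p + q + m) =
      ∑ j ∈ Finset.range (m + 1), a.coeff (p + j) * b.coeff (q + (m - j)) := by
  obtain ⟨a, rfl⟩ := ha
  obtain ⟨b, rfl⟩ := hb
  have hfactor : X ^ p * a * (X ^ q * b) = X ^ (p + q) * (a * b) := by
    rw [← mul_assoc, mul_assoc _ a, ← X_pow_mul (p := a), pow_add, mul_assoc, mul_assoc, mul_assoc]
  rw [hfactor, coeff_X_pow_mul_add, coeff_mul_eq_sum_range]
  simp only [coeff_X_pow_mul_add]

lemma X_pow_dvd_iff_coeff_add [Semiring R] {p : R[X]} {n r : ℕ} (hp : X ^ min n r ∣ p) :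
    X ^ n ∣ p ↔ ∀ m, r + m < n → p.coeff (r + m) = 0 := by
  rw [X_pow_dvd_iff] at hp ⊢
  refine ⟨fun h m hm => h _ hm, fun h d hd => ?_⟩
  rcases lt_or_ge d r with hdr | hdr
  · exact hp d (lt_min hd hdr)
  · obtain ⟨m, rfl⟩ := Nat.exists_eq_add_of_le hdr
    exact h m hd

lemma X_pow_dvd_iff_of_coeff_zero_eq_zero [Semiring R] {p : R[X]} (hp : p.coeff 0 = 0) {n : ℕ} :
    X ^ n ∣ p ↔ ∀ i, 1 ≤ i → i < n → p.coeff i = 0 := by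
  rw [X_pow_dvd_iff]
  refine ⟨fun h i _ hin => h i hin, fun h i hin => ?_⟩
  rcases Nat.eq_zero_or_pos i with rfl | hi
  · exact hp
  · exact h i hi hin

end Coefficients

section Locus

variable {F : Type*} [Field F] {u r k l k' l' : ℕ}

lemma coeff_paOf_zero (x : Vars u r → F) : (paOf F u r x).coeff 0 = 0 := by
  simp [paOf]

lemma coeff_paOf_succ (x : Vars u r → F) (i : ℕ) :
    (paOf F u r x).coeff (i + 1) = if h : i < u - 1 then x (Sum.inl ⟨i, h⟩) else 0 :=
  coeff_sum_C_mul_X_pow_add _ 1 i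

lemma coeff_pbOf_zero (x : Vars u r → F) : (pbOf F u r x).coeff 0 = 0 := by
  simp [pbOf]

lemma coeff_pbOf_succ (x : Vars u r → F) (i : ℕ) :
    (pbOf F u r x).coeff (i + 1) =
      if h : i < u - r - 1 then x (Sum.inr (Sum.inl ⟨i, h⟩)) else 0 :=
  coeff_sum_C_mul_X_pow_add _ 1 i

lemma coeff_pgOf (x : Vars u r → F) (i : ℕ) :
    (pgOf F u r x).coeff i =
      if h : i < u - r then x (Sum.inr (Sum.inr (Sum.inl ⟨i, h⟩))) else 0 :=
  coeff_sum_C_mul_X_pow_add _ 0 i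

lemma coeff_phOf (x : Vars u r → F) (i : ℕ) :
    (phOf F u r x).coeff i =
      if h : i < u - r then x (Sum.inr (Sum.inr (Sum.inr ⟨i, h⟩))) else 0 :=
  coeff_sum_C_mul_X_pow_add _ 0 i

lemma eval_Av (x : Vars u r → F) {i : ℕ} (hi : 1 ≤ i) :
    MvPolynomial.eval x (Av F u r i) = (paOf F u r x).coeff i := by
  obtain ⟨i, rfl⟩ := Nat.exists_eq_add_of_le' hi
  simp only [coeff_paOf_succ, Av, Nat.add_sub_cancel]
  split_ifs <;> simp

lemma eval_Bv (x : Vars u r → F) {i : ℕ} (hi : 1 ≤ i) :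
    MvPolynomial.eval x (Bv F u r i) = (pbOf F u r x).coeff i := by
  obtain ⟨i, rfl⟩ := Nat.exists_eq_add_of_le' hi
  simp only [coeff_pbOf_succ, Bv, Nat.add_sub_cancel]
  split_ifs <;> simp

lemma eval_Gv (x : Vars u r → F) (i : ℕ) :
    MvPolynomial.eval x (Gv F u r i) = (pgOf F u r x).coeff i := by
  rw [coeff_pgOf, Gv]
  split_ifs <;> simp

lemma eval_Hv (x : Vars u r → F) (i : ℕ) :
    MvPolynomial.eval x (Hv F u r i) = (phOf F u r x).coeff i := by
  rw [coeff_phOf, Hv]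
  split_ifs <;> simp

lemma mem_Xlocus_iff_eval (x : Vars u r → F) :
    x ∈ Xlocus F u r k l ↔
      (∀ i, 1 ≤ i → i < k → MvPolynomial.eval x (Av F u r i) = 0) ∧
      (∀ i, 1 ≤ i → i < min l (r - k) → MvPolynomial.eval x (Bv F u r i) = 0) ∧
      (∀ m, r + m < k + l →
        ∑ j ∈ Finset.range (m + 1), MvPolynomial.eval x (Av F u r (k + j)) *
            MvPolynomial.eval x (Bv F u r (r - k + m - j)) -
          ∑ j ∈ Finset.range (m + 1), MvPolynomial.eval x (Gv F u r j) *
            MvPolynomial.eval x (Hv F u r (m - j)) = 0) := by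
  simp only [← map_mul, ← map_sum, ← map_sub]
  unfold Xlocus zLocus Eset
  split_ifs with hkl
  · constructor
    · intro hx
      exact ⟨fun i hi hik => hx _ (Or.inl ⟨i, hi, by omega, rfl⟩),
        fun i hi hil => hx _ (Or.inr ⟨i, hi, by omega, rfl⟩), fun m hm => by omega⟩
    · rintro ⟨ha, hb, -⟩ _ (⟨i, hi, hik, rfl⟩ | ⟨i, hi, hil, rfl⟩)
      · exact ha i hi (by omega)
      · exact hb i hi (by omega)
  · constructor
    · intro hx
      exact ⟨fun i hi hik => hx _ (Or.inl (Or.inl ⟨i, hi, by omega, rfl⟩)),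
        fun i hi hir => hx _ (Or.inl (Or.inr ⟨i, hi, by omega, rfl⟩)),
        fun m hm => hx _ (Or.inr ⟨m, by omega, rfl⟩)⟩
    · rintro ⟨ha, hb, hquad⟩ _ ((⟨i, hi, hik, rfl⟩ | ⟨i, hi, hir, rfl⟩) | ⟨m, hm, rfl⟩)
      · exact ha i hi (by omega)
      · exact hb i hi (by omega)
      · exact hquad m (by omega)

lemma X_pow_dvd_paOf_iff (x : Vars u r → F) (n : ℕ) :
    X ^ n ∣ paOf F u r x ↔ ∀ i, 1 ≤ i → i < n → MvPolynomial.eval x (Av F u r i) = 0 := by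
  rw [X_pow_dvd_iff_of_coeff_zero_eq_zero (coeff_paOf_zero x)]
  exact forall₂_congr fun i hi => by rw [eval_Av x hi]

lemma X_pow_dvd_pbOf_iff (x : Vars u r → F) (n : ℕ) :
    X ^ n ∣ pbOf F u r x ↔ ∀ i, 1 ≤ i → i < n → MvPolynomial.eval x (Bv F u r i) = 0 := by
  rw [X_pow_dvd_iff_of_coeff_zero_eq_zero (coeff_pbOf_zero x)]
  exact forall₂_congr fun i hi => by rw [eval_Bv x hi]

/-- The determinant `ab - t^r gh` of the matrix `(a, g; t^r h, b)` defining `Mx`, whose coefficients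
from `t^r` on are the quadratic polynomials in `Eset`. -/
noncomputable def detOf (u r : ℕ) (x : Vars u r → F) : F[X] :=
  paOf F u r x * pbOf F u r x - X ^ r * (pgOf F u r x * phOf F u r x)

lemma X_pow_dvd_detOf {x : Vars u r → F} {n : ℕ} (hn : n ≤ r)
    (hab : X ^ n ∣ paOf F u r x * pbOf F u r x) : X ^ n ∣ detOf u r x :=
  dvd_sub hab (dvd_mul_of_dvd_left (pow_dvd_pow X hn) _)

lemma coeff_detOf_add {x : Vars u r → F} (hk : 1 ≤ k) (hkr : k < r)
    (ha : X ^ k ∣ paOf F u r x) (hb : X ^ (r - k) ∣ pbOf F u r x) (m : ℕ) :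
    (detOf u r x).coeff (r + m) =
      ∑ j ∈ Finset.range (m + 1), MvPolynomial.eval x (Av F u r (k + j)) *
          MvPolynomial.eval x (Bv F u r (r - k + m - j)) -
        ∑ j ∈ Finset.range (m + 1), MvPolynomial.eval x (Gv F u r j) *
          MvPolynomial.eval x (Hv F u r (m - j)) := by
  have hab : (paOf F u r x * pbOf F u r x).coeff (r + m) =
      ∑ j ∈ Finset.range (m + 1), MvPolynomial.eval x (Av F u r (k + j)) *
        MvPolynomial.eval x (Bv F u r (r - k + m - j)) := by
    have hcoeff := coeff_mul_of_X_pow_dvd ha hb m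
    rw [Nat.add_sub_of_le hkr.le] at hcoeff
    refine hcoeff.trans (Finset.sum_congr rfl fun j hj => ?_)
    have hjm : j ≤ m := Finset.mem_range_succ_iff.1 hj
    rw [eval_Av x (by omega), eval_Bv x (by omega), Nat.add_sub_assoc hjm]
  rw [detOf, coeff_sub, hab, coeff_X_pow_mul_add, coeff_mul_eq_sum_range]
  simp only [eval_Gv, eval_Hv]

theorem mem_Xlocus_iff_dvd (hk : 1 ≤ k) (hkr : k < r) (x : Vars u r → F) :
    x ∈ Xlocus F u r k l ↔
      X ^ k ∣ paOf F u r x ∧ X ^ min l (r - k) ∣ pbOf F u r x ∧ X ^ (k + l) ∣ detOf u r x := by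
  rw [mem_Xlocus_iff_eval, ← X_pow_dvd_paOf_iff, ← X_pow_dvd_pbOf_iff]
  refine and_congr_right fun ha => and_congr_right fun hb => ?_
  have hdet : X ^ min (k + l) r ∣ detOf u r x := by
    refine X_pow_dvd_detOf (min_le_right _ _) ?_
    have hmin : min (k + l) r = k + min l (r - k) := by omega
    rw [hmin, pow_add]
    exact mul_dvd_mul ha hb
  rw [X_pow_dvd_iff_coeff_add hdet]
  refine forall₂_congr fun m hm => ?_
  rw [min_eq_right (by omega)] at hb
  rw [coeff_detOf_add hk hkr ha hb]

/-- The point of `F^N` whose coordinates are the coefficients of the polynomials `a`, `b`, `g` and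
`h`; the constant terms of `a` and `b` are ignored. -/
def pointOf (u r : ℕ) (a b g h : F[X]) : Vars u r → F
  | Sum.inl i => a.coeff (i + 1)
  | Sum.inr (Sum.inl i) => b.coeff (i + 1)
  | Sum.inr (Sum.inr (Sum.inl i)) => g.coeff i
  | Sum.inr (Sum.inr (Sum.inr i)) => h.coeff i

lemma paOf_pointOf {a : F[X]} (b g h : F[X]) (ha₀ : X ∣ a) (ha : a.degree < u) :
    paOf F u r (pointOf u r a b g h) = a :=
  sum_C_coeff_mul_X_pow_add (by rwa [pow_one])
    (ha.trans_le (by exact_mod_cast Nat.le_add_of_sub_le le_rfl))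

lemma pbOf_pointOf (a : F[X]) {b : F[X]} (g h : F[X]) (hb₀ : X ∣ b)
    (hb : b.degree < (u - r : ℕ)) : pbOf F u r (pointOf u r a b g h) = b :=
  sum_C_coeff_mul_X_pow_add (by rwa [pow_one])
    (hb.trans_le (by exact_mod_cast Nat.le_add_of_sub_le le_rfl))

lemma pgOf_pointOf (a b : F[X]) {g : F[X]} (h : F[X]) (hg : g.degree < (u - r : ℕ)) :
    pgOf F u r (pointOf u r a b g h) = g := by
  simpa [pgOf, pointOf] using sum_C_coeff_mul_X_pow_add (d := 0) (by simp) hg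

lemma phOf_pointOf (a b g : F[X]) {h : F[X]} (hh : h.degree < (u - r : ℕ)) :
    phOf F u r (pointOf u r a b g h) = h := by
  simpa [phOf, pointOf] using sum_C_coeff_mul_X_pow_add (d := 0) (by simp) hh

lemma mem_Xlocus_pointOf_iff (hk : 1 ≤ k) (hkr : k < r) {a b g h : F[X]}
    (ha₀ : X ∣ a) (ha : a.degree < u) (hb₀ : X ∣ b) (hb : b.degree < (u - r : ℕ))
    (hg : g.degree < (u - r : ℕ)) (hh : h.degree < (u - r : ℕ)) :
    pointOf u r a b g h ∈ Xlocus F u r k l ↔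
      X ^ k ∣ a ∧ X ^ min l (r - k) ∣ b ∧ X ^ (k + l) ∣ a * b - X ^ r * (g * h) := by
  rw [mem_Xlocus_iff_dvd hk hkr, detOf, paOf_pointOf _ _ _ ha₀ ha, pbOf_pointOf _ _ _ hb₀ hb,
    pgOf_pointOf _ _ _ hg, phOf_pointOf _ _ _ hh]

lemma pointOf_a_mem_Xlocus_iff {n : ℕ} (hn : 1 ≤ n) (hnu : n < u) (hk : 1 ≤ k) (hkr : k < r) :
    pointOf u r (X ^ n : F[X]) 0 0 0 ∈ Xlocus F u r k l ↔ k ≤ n := by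
  rw [mem_Xlocus_pointOf_iff hk hkr] <;>
    simp [pow_dvd_pow_iff, not_isUnit_X, hnu, Nat.ne_of_gt hn]

lemma pointOf_b_mem_Xlocus_iff {n : ℕ} (hn : 1 ≤ n) (hnu : n < u - r) (hk : 1 ≤ k) (hkr : k < r) :
    pointOf u r 0 (X ^ n : F[X]) 0 0 ∈ Xlocus F u r k l ↔ min l (r - k) ≤ n := by
  rw [mem_Xlocus_pointOf_iff hk hkr] <;>
    simp [pow_dvd_pow_iff, not_isUnit_X, hnu, Nat.ne_of_gt hn]

lemma pointOf_gh_mem_Xlocus_iff {n : ℕ} (hnu : n < u - r) (hk : 1 ≤ k) (hkr : k < r) :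
    pointOf u r 0 0 (X ^ n : F[X]) 1 ∈ Xlocus F u r k l ↔ k + l ≤ r + n := by
  have hur : r < u := by omega
  rw [mem_Xlocus_pointOf_iff hk hkr] <;>
    simp [pow_dvd_pow_iff, not_isUnit_X, ← pow_add, hnu, hur]

theorem Xlocus_subset_iff_le (hk : 1 ≤ k) (hkr : k < r) (hlu : l ≤ u - r)
    (hk' : 1 ≤ k') (hkr' : k' < r) (hl' : 1 ≤ l') (hlu' : l' ≤ u - r) :
    Xlocus F u r k' l' ⊆ Xlocus F u r k l ↔
      k ≤ k' ∧ min l (r - k) ≤ min l' (r - k') ∧ k + l ≤ k' + l' := by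
  constructor
  · intro hsub
    have ha : k ≤ k' :=
      (pointOf_a_mem_Xlocus_iff hk' (by omega) hk hkr).1 <|
        hsub <| (pointOf_a_mem_Xlocus_iff hk' (by omega) hk' hkr').2 le_rfl
    have hb : min l (r - k) ≤ min l' (r - k') := by
      by_contra! hlt
      have hn : 1 ≤ min l' (r - k') := by omega
      have hnu : min l' (r - k') < u - r := by omega
      exact hlt.not_ge <| (pointOf_b_mem_Xlocus_iff hn hnu hk hkr).1 <|
        hsub <| (pointOf_b_mem_Xlocus_iff hn hnu hk' hkr').2 le_rfl
    have hgh : k + l ≤ r + (k' + l' - r) :=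
      (pointOf_gh_mem_Xlocus_iff (by omega) hk hkr).1 <|
        hsub <| (pointOf_gh_mem_Xlocus_iff (by omega) hk' hkr').2 (by omega)
    exact ⟨ha, hb, by omega⟩
  · rintro ⟨ha, hb, hdet⟩ x
    rw [mem_Xlocus_iff_dvd hk hkr, mem_Xlocus_iff_dvd hk' hkr']
    exact And.imp (pow_dvd_pow X ha).trans <|
      And.imp (pow_dvd_pow X hb).trans (pow_dvd_pow X hdet).trans

end Locus

theorem statement16_general (F : Type*) [Field F] (u r k l k' l' : ℕ)
    (hk : 1 ≤ k) (hkr : k < r) (hlu : l ≤ u - r)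
    (hk' : 1 ≤ k') (hkr' : k' < r) (hl' : 1 ≤ l') (hlu' : l' ≤ u - r) :
    Xlocus F u r k' l' ⊆ Xlocus F u r k l ↔
      ((k = k' ∧ l ≤ l') ∨ (k ≤ k' ∧ l ≤ l' ∧ k' + l ≤ r)) := by
  rw [Xlocus_subset_iff_le hk hkr hlu hk' hkr' hl' hlu']
  omega

/-- `X^Q_{k′,l′} ⊆ X^Q_{k,l}` if and only if either `k = k′` and
`l ≤ l′`, or `k ≤ k′`, `l ≤ l′` and `k′ + l ≤ r`. -/
theorem statement16 (F : Type*) [Field F] [Infinite F] (u r k l k' l' : ℕ)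
    (hru : r < u) (hr : 2 ≤ r)
    (hk1 : 1 ≤ k) (hk2 : k ≤ r - 1) (hl1 : 1 ≤ l) (hl2 : l ≤ u - r)
    (hk1' : 1 ≤ k') (hk2' : k' ≤ r - 1) (hl1' : 1 ≤ l') (hl2' : l' ≤ u - r) :
    Xlocus F u r k' l' ⊆ Xlocus F u r k l ↔
      ((k = k' ∧ l ≤ l') ∨ (k ≤ k' ∧ l ≤ l' ∧ k' + l ≤ r)) := by
  exact statement16_general F u r k l k' l' hk1 (by omega) hl2 hk1' (by omega) hl1' hl2'
end

section
/- Let F be an infinite field and let Q = (5,2), so u = 5, r = 3 and N = 9 with coordinates x = (a_1, a_2, a_3, a_4, b_1, g_0, g_1, h_0, h_1) ∈ F^9. Let Z be the Zariski closure in F^9 of the set { x ∈ F^9 : the Jordan type of M_x equals (3,2,1,1) }. Then the set { x ∈ F^9 : a_1 = 0, b_1 = 0 and g_0 h_0 = 0 } is strictly contained in Z, and Z is not irreducible: it has at least three irreducible components. -/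
open Polynomial

/-- An irreducible Zariski-closed subset of `F^N`: nonempty, closed, and not the union
of two proper closed subsets. -/
def IsZIrred (F : Type*) [Field F] (u r : ℕ) (S : Set (Vars u r → F)) : Prop :=
  IsZClosed F u r S ∧ S.Nonempty ∧
    ∀ C₁ C₂ : Set (Vars u r → F), IsZClosed F u r C₁ → IsZClosed F u r C₂ →
      S = C₁ ∪ C₂ → S = C₁ ∨ S = C₂

/-- An irreducible component of `Z`: a maximal irreducible closed subset of `Z`. -/
def IsZComponent (F : Type*) [Field F] (u r : ℕ) (Z C : Set (Vars u r → F)) : Prop :=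
  IsZIrred F u r C ∧ C ⊆ Z ∧
    ∀ C' : Set (Vars u r → F), IsZIrred F u r C' → C ⊆ C' → C' ⊆ Z → C = C'

/-!
In the monomial bases `M_x` becomes a `7 × 7` matrix `A`, and its Jordan type is `(3,2,1,1)`
exactly when `A`, `A²`, `A³` have ranks `3`, `1`, `0`. Suitable minors of `A³`, `A²` and `A` show
that the equations `a_1 = 0`, `g_0 h_0 = 0` and `a_2 b_1 = 0` hold on the Jordan locus. They cut out
the union of four coordinate subspaces: `a_1` vanishes, and so do one of `a_2`, `b_1` and one of
`g_0`, `h_0`.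

Over an infinite field a coordinate subspace is irreducible, and a nonempty Zariski-open subset of
each of the four consists of points of type `(3,2,1,1)`, so the four subspaces are the irreducible
components of `Z`. Exchanging `g` and `h` transposes `A` up to reversing the bases, and hence
preserves the Jordan type; only the two subspaces with `h_0 = 0` have to be examined.
-/

section MatrixRank

variable {m n R : Type*} [Fintype n]

lemma card_le_rank_of_submatrix_eq [CommRing R] [IsDomain R] {k : Type*} [Fintype k]
    [DecidableEq k] {A : Matrix m n R} {f : k → m} {g : k → n} {B : Matrix k k R}
    (hAB : A.submatrix f g = B) (hB : B.det ≠ 0) : Fintype.card k ≤ A.rank :=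
  (Matrix.rank_of_det_ne_zero hB).symm.trans_le (hAB ▸ Matrix.rank_submatrix_le A f g)

lemma one_le_rank_of_apply_ne_zero [CommRing R] [IsDomain R] {A : Matrix m n R} {i : m} {j : n}
    (h : A i j ≠ 0) : 1 ≤ A.rank :=
  card_le_rank_of_submatrix_eq (f := fun _ : Unit ↦ i) (g := fun _ ↦ j) rfl
    (by rwa [Matrix.det_unique])

lemma rank_add_le_rank_add_rank [Field R] [Finite m] (A B : Matrix m n R) :
    (A + B).rank ≤ A.rank + B.rank := by
  refine le_trans (Submodule.finrank_mono ?_) (Submodule.finrank_add_le_finrank_add_finrank _ _)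
  rw [Matrix.mulVecLin_add]
  exact LinearMap.range_add_le _ _

lemma rank_le_card_add_card_of_forall_eq_zero [Field R] [Finite m] {A : Matrix m n R}
    (s : Finset m) (t : Finset n) (h : ∀ i ∉ s, ∀ j ∉ t, A i j = 0) :
    A.rank ≤ s.card + t.card := by
  classical
  have := Fintype.ofFinite m
  let B : Matrix m n R := Matrix.of fun i j ↦ if i ∈ s then A i j else 0
  have hrows : B.rank ≤ s.card := by
    refine B.rank_le_card_of_support_subset s (Function.support_subset_iff'.2 fun i hi ↦ ?_)
    ext j
    exact if_neg hi
  have hcols : (A - B).rank ≤ t.card := by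
    rw [← Matrix.rank_transpose]
    refine Matrix.rank_le_card_of_support_subset _ t (Function.support_subset_iff'.2 fun j hj ↦ ?_)
    ext i
    by_cases hi : i ∈ s
    · simp [B, hi]
    · simp [B, hi, h i hi j hj]
  calc
    A.rank = (B + (A - B)).rank := by rw [add_sub_cancel]
    _ ≤ B.rank + (A - B).rank := rank_add_le_rank_add_rank _ _
    _ ≤ s.card + t.card := add_le_add hrows hcols

end MatrixRank

section JordanType

open scoped Matrix

variable {F : Type*} [Field F] {ι V : Type*} [Fintype ι] [DecidableEq ι] [AddCommGroup V]
  [Module F V]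

lemma finrank_ker_pow_add_rank_toMatrix_pow (v : Module.Basis ι F V) (B : Module.End F V) (s : ℕ) :
    Module.finrank F (LinearMap.ker (B ^ s)) + (LinearMap.toMatrix v v B ^ s).rank =
      Fintype.card ι := by
  have : FiniteDimensional F V := v.finiteDimensional_of_finite
  rw [Matrix.rank_eq_finrank_range_toLin _ v v, LinearMap.toMatrix_pow, Matrix.toLin_toMatrix,
    add_comm, LinearMap.finrank_range_add_finrank_ker, Module.finrank_eq_card_basis v]

lemma jordanTypeIs_iff_rank_pow (v : Module.Basis ι F V) (B : Module.End F V) {P : Multiset ℕ}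
    (hP : P.sum = Fintype.card ι) :
    JordanTypeIs F B P ↔
      ∀ s, (LinearMap.toMatrix v v B ^ s).rank = (P.map fun p ↦ p - s).sum := by
  refine forall_congr' fun s ↦ ?_
  have hparts : (P.map fun p ↦ min p s).sum + (P.map fun p ↦ p - s).sum = P.sum := by
    rw [← Multiset.sum_map_add, ← congrArg Multiset.sum P.map_id']
    exact congrArg Multiset.sum (Multiset.map_congr rfl fun p _ ↦ by lia)
  have hnullity := finrank_ker_pow_add_rank_toMatrix_pow v B s
  lia

lemma jordanTypeIs_congr_of_toMatrix_eq_transpose {v : Module.Basis ι F V} {B B' : Module.End F V}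
    (σ : ι ≃ ι) (h : LinearMap.toMatrix v v B' = (LinearMap.toMatrix v v B)ᵀ.reindex σ σ)
    (P : Multiset ℕ) : JordanTypeIs F B' P ↔ JordanTypeIs F B P := by
  have hrank (s : ℕ) :
      (LinearMap.toMatrix v v B' ^ s).rank = (LinearMap.toMatrix v v B ^ s).rank := by
    rw [h, ← Matrix.coe_reindexAlgEquiv F F, ← map_pow, Matrix.coe_reindexAlgEquiv,
      Matrix.rank_reindex, ← Matrix.transpose_pow, Matrix.rank_transpose]
  refine forall_congr' fun s ↦ ?_
  have hB := finrank_ker_pow_add_rank_toMatrix_pow v B s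
  have hB' := finrank_ker_pow_add_rank_toMatrix_pow v B' s
  rw [hrank s] at hB'
  rw [Nat.add_right_cancel (hB'.trans hB.symm)]

lemma jordanTypeIs_three_two_one_one_iff (v : Module.Basis ι F V) (B : Module.End F V)
    (hι : Fintype.card ι = 7) :
    JordanTypeIs F B {3, 2, 1, 1} ↔ (LinearMap.toMatrix v v B).rank = 3 ∧
      (LinearMap.toMatrix v v B ^ 2).rank = 1 ∧ (LinearMap.toMatrix v v B ^ 3).rank = 0 := by
  rw [jordanTypeIs_iff_rank_pow v B (by simp [hι])]
  generalize LinearMap.toMatrix v v B = A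
  refine ⟨fun h ↦ ⟨by simpa using h 1, by simpa using h 2, by simpa using h 3⟩, ?_⟩
  rintro ⟨h₁, h₂, h₃⟩ s
  match s with
  | 0 => simp [hι]
  | 1 => simp [h₁]
  | 2 => simp [h₂]
  | s + 3 =>
    have : (A ^ (s + 3)).rank ≤ (A ^ 3).rank := by
      rw [pow_add]
      exact Matrix.rank_mul_le_right _ _
    simpa [h₃] using this

end JordanType

section QuotientBasis

variable (F : Type*) [Field F]

/-- The basis `1, t, …, t^(m-1)` of `F[t]/(t^m)`. -/
noncomputable def monomialBasis (m : ℕ) : Module.Basis (Fin m) F (PQ F m) :=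
  (AdjoinRoot.powerBasisAux' (monic_X_pow m)).reindex (finCongr (natDegree_X_pow m))

lemma monomialBasis_repr_mk {m : ℕ} (p : F[X]) (i : Fin m) :
    (monomialBasis F m).repr (Ideal.Quotient.mk _ p) i = p.coeff i := by
  have hrepr : (monomialBasis F m).repr (Ideal.Quotient.mk _ p) i = (p %ₘ X ^ m).coeff i := rfl
  have hdvd : (X : F[X]) ^ m ∣ p %ₘ X ^ m - p :=
    (modByMonic_eq_sub_mul_div p (X ^ m)).symm ▸ by simp
  rw [hrepr, ← sub_eq_zero, ← coeff_sub, X_pow_dvd_iff.1 hdvd i i.2]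

lemma monomialBasis_apply {m : ℕ} (i : Fin m) :
    monomialBasis F m i = Ideal.Quotient.mk _ (X ^ (i : ℕ)) := by
  refine (monomialBasis F m).ext_elem fun j ↦ ?_
  rw [monomialBasis_repr_mk, coeff_X_pow, Module.Basis.repr_self, Finsupp.single_apply]
  simp only [Fin.ext_iff, eq_comm]

/-- The matrix, in the monomial bases, of multiplication by `c` from `F[t]/(t^m)` to
`F[t]/(t^m')`. -/
noncomputable def mulMatrix {F : Type*} [Field F] (m' m : ℕ) (c : F[X]) :
    Matrix (Fin m') (Fin m) F :=
  Matrix.of fun i j ↦ (c * X ^ (j : ℕ)).coeff i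

lemma toMatrix_mulQ {m m' : ℕ} (c : F[X]) (h : (X : F[X]) ^ m' ∣ c * X ^ m) :
    LinearMap.toMatrix (monomialBasis F m) (monomialBasis F m') (mulQ F m m' c h) =
      mulMatrix m' m c := by
  ext i j
  rw [LinearMap.toMatrix_apply, monomialBasis_apply]
  exact monomialBasis_repr_mk F _ i

/-- The basis of `F[t]/(t^u) × F[t]/(t^(u-r))` formed by the monomials of the two factors. -/
noncomputable def pairBasis (u r : ℕ) :
    Module.Basis (Fin u ⊕ Fin (u - r)) F (PQ F u × PQ F (u - r)) :=
  (monomialBasis F u).prod (monomialBasis F (u - r))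

variable {F} {u r : ℕ} (hru : r ≤ u) (a g h b : F[X])

lemma toMatrix_Mmap :
    LinearMap.toMatrix (pairBasis F u r) (pairBasis F u r) (Mmap F u r hru a g h b) =
      Matrix.fromBlocks (mulMatrix u u a) (mulMatrix u (u - r) (X ^ r * g))
        (mulMatrix (u - r) u h) (mulMatrix (u - r) (u - r) b) := by
  rw [← toMatrix_mulQ F a (dvd_A F u a), ← toMatrix_mulQ F _ (dvd_G F u r hru g),
    ← toMatrix_mulQ F h (dvd_H F u r h), ← toMatrix_mulQ F b (dvd_A F (u - r) b)]
  ext (i | i) (j | j) <;> simp [pairBasis, Mmap, LinearMap.toMatrix_apply]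

lemma mulMatrix_rev_rev (c : F[X]) (i : Fin (u - r)) (j : Fin u) :
    mulMatrix u (u - r) (X ^ r * c) j.rev i.rev = mulMatrix (u - r) u c i j := by
  have hle : r + (u - r - (i + 1)) ≤ u - (j + 1) ↔ (j : ℕ) ≤ i := by lia
  have hsub : u - (j + 1) - (r + (u - r - (i + 1))) = (i : ℕ) - j := by lia
  simp only [mulMatrix, Matrix.of_apply, Fin.val_rev, mul_comm (X ^ r) c, mul_assoc, ← pow_add,
    coeff_mul_X_pow', hle, hsub]

lemma mulMatrix_self_rev_rev (m : ℕ) (c : F[X]) (i j : Fin m) :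
    mulMatrix m m c j.rev i.rev = mulMatrix m m c i j := by
  simpa using mulMatrix_rev_rev (r := 0) c i j

lemma jordanTypeIs_Mmap_swap (P : Multiset ℕ) :
    JordanTypeIs F (Mmap F u r hru a h g b) P ↔ JordanTypeIs F (Mmap F u r hru a g h b) P := by
  refine jordanTypeIs_congr_of_toMatrix_eq_transpose (v := pairBasis F u r)
    (Equiv.sumCongr Fin.revPerm Fin.revPerm) ?_ P
  rw [toMatrix_Mmap, toMatrix_Mmap]
  ext (i | i) (j | j)
  · simp [mulMatrix_self_rev_rev]
  · simp [← mulMatrix_rev_rev]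
  · simp [mulMatrix_rev_rev]
  · simp [mulMatrix_self_rev_rev]

end QuotientBasis

section ZariskiTopology

open MvPolynomial

variable {F : Type*} [Field F] {u r : ℕ}

lemma mem_zClosure_iff {S : Set (Vars u r → F)} {x : Vars u r → F} :
    x ∈ zClosure F u r S ↔ ∀ p ∈ vanishingIdeal F S, eval x p = 0 := by
  refine ⟨fun hx ↦ hx (zLocus F u r (vanishingIdeal F S)) ⟨⟨_, rfl⟩, fun y hy p hp ↦ hp y hy⟩, ?_⟩
  rintro hx _ ⟨⟨T, rfl⟩, hST⟩ p hp
  exact hx p fun y hy ↦ hST hy p hp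

lemma subset_zClosure (S : Set (Vars u r → F)) : S ⊆ zClosure F u r S :=
  Set.subset_sInter fun _ hC ↦ hC.2

lemma IsZClosed.zClosure_eq {S : Set (Vars u r → F)} (hS : IsZClosed F u r S) :
    zClosure F u r S = S :=
  Set.Subset.antisymm (Set.sInter_subset_of_mem ⟨hS, Set.Subset.rfl⟩) (subset_zClosure S)

lemma IsZClosed.subset_of_vanishingIdeal_le {S T : Set (Vars u r → F)} (hT : IsZClosed F u r T)
    (h : vanishingIdeal F T ≤ vanishingIdeal F S) : S ⊆ T := by
  intro x hx
  rw [← hT.zClosure_eq, mem_zClosure_iff]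
  exact fun p hp ↦ h hp x hx

lemma IsZClosed.inter_zero {S : Set (Vars u r → F)} (hS : IsZClosed F u r S)
    (p : MvPolynomial (Vars u r) F) : IsZClosed F u r (S ∩ {x | eval x p = 0}) := by
  obtain ⟨T, rfl⟩ := hS
  exact ⟨insert p T, by ext x; simp [zLocus, and_comm]⟩

lemma isZIrred_iff_isPrime_vanishingIdeal {S : Set (Vars u r → F)} (hS : IsZClosed F u r S) :
    IsZIrred F u r S ↔ (vanishingIdeal F S).IsPrime := by
  constructor
  · rintro ⟨-, ⟨x, hx⟩, hirr⟩
    refine Ideal.isPrime_iff.2 ⟨fun h ↦ ?_, fun {p q} hpq ↦ ?_⟩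
    · simpa using (Ideal.eq_top_iff_one _).1 h x hx
    have hcover : S = S ∩ {x | eval x p = 0} ∪ S ∩ {x | eval x q = 0} := by
      rw [← Set.inter_union_distrib_left, eq_comm, Set.inter_eq_left]
      exact fun y hy ↦ mul_eq_zero.1 (by simpa using hpq y hy)
    exact (hirr _ _ (hS.inter_zero p) (hS.inter_zero q) hcover).imp
      (fun h y hy ↦ (h ▸ hy : y ∈ S ∩ _).2) (fun h y hy ↦ (h ▸ hy : y ∈ S ∩ _).2)
  · intro hprime
    refine ⟨hS, Set.nonempty_iff_ne_empty.2 fun h ↦ ?_, fun C₁ C₂ hC₁ hC₂ hcover ↦ ?_⟩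
    · exact hprime.ne_top (h ▸ vanishingIdeal_empty)
    have hle : vanishingIdeal F C₁ ⊓ vanishingIdeal F C₂ ≤ vanishingIdeal F S := by
      rintro p ⟨hp₁, hp₂⟩ x hx
      exact (hcover ▸ hx : x ∈ C₁ ∪ C₂).elim (hp₁ x) (hp₂ x)
    exact (hprime.inf_le.1 hle).imp
      (fun h ↦ (hC₁.subset_of_vanishingIdeal_le h).antisymm (hcover ▸ Set.subset_union_left))
      (fun h ↦ (hC₂.subset_of_vanishingIdeal_le h).antisymm (hcover ▸ Set.subset_union_right))

lemma IsZIrred.isPrime_vanishingIdeal {S : Set (Vars u r → F)} (hS : IsZIrred F u r S) :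
    (vanishingIdeal F S).IsPrime :=
  (isZIrred_iff_isPrime_vanishingIdeal hS.1).1 hS

lemma IsZIrred.subset_zClosure_of_eval_ne_zero {S T : Set (Vars u r → F)}
    (hS : IsZIrred F u r S) {f : MvPolynomial (Vars u r) F} (hf : ∃ x ∈ S, eval x f ≠ 0)
    (hT : ∀ x ∈ S, eval x f ≠ 0 → x ∈ T) : S ⊆ zClosure F u r T := by
  intro x hx
  rw [mem_zClosure_iff]
  intro p hp
  have hpf : p * f ∈ vanishingIdeal F S := fun y hy ↦ by
    by_cases hfy : eval y f = 0
    · simp [hfy]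
    · simpa using Or.inl (hp y (hT y hy hfy))
  obtain ⟨y, hy, hfy⟩ := hf
  exact (hS.isPrime_vanishingIdeal.mem_or_mem hpf).resolve_right (fun h ↦ hfy (h y hy)) x hx

lemma IsZIrred.exists_subset_of_subset_biUnion {ι : Type*} {S : Set (Vars u r → F)}
    (hS : IsZIrred F u r S) (s : Finset ι) {C : ι → Set (Vars u r → F)}
    (hC : ∀ i ∈ s, IsZClosed F u r (C i)) (hSC : S ⊆ ⋃ i ∈ s, C i) : ∃ i ∈ s, S ⊆ C i := by
  have hle : s.inf (fun i ↦ vanishingIdeal F (C i)) ≤ vanishingIdeal F S := by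
    intro p hp x hx
    obtain ⟨i, hi, hxi⟩ := Set.mem_iUnion₂.1 (hSC hx)
    exact Finset.inf_le (f := fun i ↦ vanishingIdeal F (C i)) hi hp x hxi
  obtain ⟨i, hi, h⟩ := hS.isPrime_vanishingIdeal.inf_le'.1 hle
  exact ⟨i, hi, (hC i hi).subset_of_vanishingIdeal_le h⟩

lemma isZComponent_biUnion {ι : Type*} (s : Finset ι) {C : ι → Set (Vars u r → F)}
    (hC : ∀ i ∈ s, IsZIrred F u r (C i)) (hanti : ∀ i ∈ s, ∀ j ∈ s, C i ⊆ C j → i = j)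
    {i : ι} (hi : i ∈ s) : IsZComponent F u r (⋃ i ∈ s, C i) (C i) := by
  refine ⟨hC i hi, Set.subset_biUnion_of_mem (u := C) hi, fun C' hC' hiC' hC's ↦ ?_⟩
  obtain ⟨j, hj, hC'j⟩ := hC'.exists_subset_of_subset_biUnion s (fun j hj ↦ (hC j hj).1) hC's
  obtain rfl := hanti i hi j hj (hiC'.trans hC'j)
  exact hiC'.antisymm hC'j

lemma IsZComponent.eq_of_isZIrred {Z C : Set (Vars u r → F)} (hC : IsZComponent F u r Z C)
    (hZ : IsZIrred F u r Z) : C = Z :=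
  hC.2.2 Z hZ hC.2.1 Set.Subset.rfl

lemma comp_mem_zClosure {S T : Set (Vars u r → F)} (e : Vars u r → Vars u r)
    (h : ∀ x ∈ S, x ∘ e ∈ T) {x : Vars u r → F} (hx : x ∈ zClosure F u r S) :
    x ∘ e ∈ zClosure F u r T := by
  rw [mem_zClosure_iff] at hx ⊢
  intro p hp
  rw [← eval_rename]
  refine hx _ fun y hy ↦ ?_
  simpa [aeval_rename] using hp _ (h y hy)

lemma isPrime_vanishingIdeal_range [Infinite F] {σ τ : Type*} (f : σ → MvPolynomial τ F) :
    (vanishingIdeal F (Set.range fun (x : τ → F) i ↦ eval x (f i))).IsPrime := by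
  convert RingHom.ker_isPrime (aeval f : MvPolynomial σ F →ₐ[F] MvPolynomial τ F)
  ext p
  have heval (x : τ → F) : eval x (bind₁ f p) = eval (fun i ↦ eval x (f i)) p := by
    simpa [aeval_eq_eval] using aeval_bind₁ x f p
  simp [RingHom.mem_ker, MvPolynomial.funext_iff, heval]

/-- The coordinate subspace on which the coordinates in `I` vanish. -/
def coordSubspace (F : Type*) [Field F] {u r : ℕ} (I : Finset (Vars u r)) : Set (Vars u r → F) :=
  {x | ∀ i ∈ I, x i = 0}

lemma isZClosed_coordSubspace (I : Finset (Vars u r)) :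
    IsZClosed F u r (coordSubspace F I) :=
  ⟨MvPolynomial.X '' I, Set.ext fun x ↦
    (Set.forall_mem_image.trans (forall₂_congr fun i _ ↦ by rw [MvPolynomial.eval_X])).symm⟩

lemma isZIrred_coordSubspace [Infinite F] (I : Finset (Vars u r)) :
    IsZIrred F u r (coordSubspace F I) := by
  rw [isZIrred_iff_isPrime_vanishingIdeal (isZClosed_coordSubspace I)]
  convert isPrime_vanishingIdeal_range (F := F)
    (fun i ↦ if i ∈ I then 0 else (MvPolynomial.X i : MvPolynomial (Vars u r) F))
  ext x
  constructor
  · refine fun hx ↦ ⟨x, funext fun i ↦ ?_⟩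
    by_cases hi : i ∈ I <;> simp [hi, hx i]
  · rintro ⟨y, rfl⟩ i hi
    simp [hi]

lemma coordSubspace_subset_iff {I J : Finset (Vars u r)} :
    coordSubspace F I ⊆ coordSubspace F J ↔ J ⊆ I := by
  refine ⟨fun h j hj ↦ ?_, fun h x hx i hi ↦ hx i (h hi)⟩
  by_contra hjI
  have hsingle : Pi.single j 1 ∈ coordSubspace F I := fun i hi ↦
    Pi.single_eq_of_ne (by rintro rfl; exact hjI hi) 1
  simpa using h hsingle j hj

lemma coordSubspace_injective :
    Function.Injective (coordSubspace F : Finset (Vars u r) → Set (Vars u r → F)) :=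
  fun _ _ h ↦ (coordSubspace_subset_iff.1 h.ge).antisymm (coordSubspace_subset_iff.1 h.le)

end ZariskiTopology

section FiveTwo

variable {F : Type*} [Field F] {a g h b : F[X]}

/-- The matrix of `M` in the monomial bases for `Q = (5,2)`, when `a` and `b` have no constant
term. -/
noncomputable def matrixFiveTwo (a g h b : F[X]) :
    Matrix (Fin 5 ⊕ Fin 2) (Fin 5 ⊕ Fin 2) F :=
  Matrix.fromBlocks
    !![0, 0, 0, 0, 0;
       a.coeff 1, 0, 0, 0, 0;
       a.coeff 2, a.coeff 1, 0, 0, 0;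
       a.coeff 3, a.coeff 2, a.coeff 1, 0, 0;
       a.coeff 4, a.coeff 3, a.coeff 2, a.coeff 1, 0]
    !![0, 0; 0, 0; 0, 0; g.coeff 0, 0; g.coeff 1, g.coeff 0]
    !![h.coeff 0, 0, 0, 0, 0; h.coeff 1, h.coeff 0, 0, 0, 0]
    !![0, 0; b.coeff 1, 0]

lemma toMatrix_Mmap_five_three (ha : a.coeff 0 = 0) (hb : b.coeff 0 = 0) :
    LinearMap.toMatrix (pairBasis F 5 3) (pairBasis F 5 3)
      (Mmap F 5 3 (by norm_num) a g h b) = matrixFiveTwo a g h b := by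
  rw [toMatrix_Mmap, matrixFiveTwo]
  congr 1 <;> ext i j <;> fin_cases i <;> fin_cases j <;>
    simp [mulMatrix, coeff_mul_X_pow', mul_comm (X ^ 3) g, ha, hb]

lemma matrixFiveTwo_sq (ha₁ : a.coeff 1 = 0) :
    matrixFiveTwo a g h b ^ 2 =
      Matrix.fromBlocks
        !![0, 0, 0, 0, 0; 0, 0, 0, 0, 0; 0, 0, 0, 0, 0; g.coeff 0 * h.coeff 0, 0, 0, 0, 0;
          a.coeff 2 * a.coeff 2 + (g.coeff 1 * h.coeff 0 + g.coeff 0 * h.coeff 1),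
          g.coeff 0 * h.coeff 0, 0, 0, 0]
        !![0, 0; 0, 0; 0, 0; 0, 0; g.coeff 0 * b.coeff 1, 0]
        !![0, 0, 0, 0, 0; b.coeff 1 * h.coeff 0, 0, 0, 0, 0]
        !![0, 0; 0, 0] := by
  rw [sq, matrixFiveTwo, Matrix.fromBlocks_multiply]
  congr 1 <;> ext i j <;> fin_cases i <;> fin_cases j <;>
    simp [ha₁]

lemma matrixFiveTwo_cube_apply : (matrixFiveTwo a g h b ^ 3) (.inl 3) (.inl 0) = a.coeff 1 ^ 3 := by
  simp [pow_succ, matrixFiveTwo, Matrix.fromBlocks_multiply, Matrix.mul_apply, Fin.sum_univ_succ]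

lemma coeff_one_eq_zero_of_rank_cube (h₃ : (matrixFiveTwo a g h b ^ 3).rank = 0) :
    a.coeff 1 = 0 := by
  by_contra ha₁
  have hentry : (matrixFiveTwo a g h b ^ 3) (.inl 3) (.inl 0) ≠ 0 :=
    matrixFiveTwo_cube_apply.trans_ne (pow_ne_zero 3 ha₁)
  exact absurd h₃ (Nat.one_le_iff_ne_zero.1 (one_le_rank_of_apply_ne_zero hentry))

lemma mul_coeff_zero_eq_zero_of_rank_sq (ha₁ : a.coeff 1 = 0)
    (h₂ : (matrixFiveTwo a g h b ^ 2).rank = 1) : g.coeff 0 * h.coeff 0 = 0 := by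
  by_contra hgh
  have hminor : (matrixFiveTwo a g h b ^ 2).submatrix ![.inl 3, .inl 4] ![.inl 0, .inl 1] =
      !![g.coeff 0 * h.coeff 0, 0;
         a.coeff 2 * a.coeff 2 + (g.coeff 1 * h.coeff 0 + g.coeff 0 * h.coeff 1),
         g.coeff 0 * h.coeff 0] := by
    rw [matrixFiveTwo_sq ha₁]
    ext i j
    fin_cases i <;> fin_cases j <;> rfl
  have hle := card_le_rank_of_submatrix_eq hminor (by simpa [Matrix.det_fin_two] using hgh)
  simp [h₂] at hle

lemma mul_coeff_one_eq_zero_of_rank (ha₁ : a.coeff 1 = 0) (hgh : g.coeff 0 * h.coeff 0 = 0)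
    (h₁ : (matrixFiveTwo a g h b).rank = 3) : a.coeff 2 * b.coeff 1 = 0 := by
  by_contra hab
  have hminor : (matrixFiveTwo a g h b).submatrix ![.inl 2, .inl 3, .inl 4, .inr 1]
      ![.inl 0, .inl 1, .inl 2, .inr 0] =
        !![a.coeff 2, 0, 0, 0;
           a.coeff 3, a.coeff 2, 0, g.coeff 0;
           a.coeff 4, a.coeff 3, a.coeff 2, g.coeff 1;
           h.coeff 1, h.coeff 0, 0, b.coeff 1] := by
    ext i j
    fin_cases i <;> fin_cases j <;> simp [matrixFiveTwo, ha₁]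
  have hdet : Matrix.det !![a.coeff 2, 0, 0, 0;
      a.coeff 3, a.coeff 2, 0, g.coeff 0;
      a.coeff 4, a.coeff 3, a.coeff 2, g.coeff 1;
      h.coeff 1, h.coeff 0, 0, b.coeff 1] = a.coeff 2 ^ 2 * (a.coeff 2 * b.coeff 1) := by
    trans a.coeff 2 * Matrix.det !![a.coeff 2, 0, g.coeff 0;
      a.coeff 3, a.coeff 2, g.coeff 1;
      h.coeff 0, 0, b.coeff 1]
    · simp [Matrix.det_succ_row_zero, Fin.sum_univ_succ, Fin.succAbove]
    · simp only [Matrix.det_fin_three, Matrix.of_apply, Matrix.cons_val', Matrix.cons_val]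
      linear_combination -a.coeff 2 ^ 2 * hgh
  have hle := card_le_rank_of_submatrix_eq hminor
    (hdet.trans_ne (mul_ne_zero (pow_ne_zero 2 (left_ne_zero_of_mul hab)) hab))
  simp [h₁] at hle

lemma rank_matrixFiveTwo_sq (ha₁ : a.coeff 1 = 0) (hh₀ : h.coeff 0 = 0)
    (hne : a.coeff 2 * a.coeff 2 + g.coeff 0 * h.coeff 1 ≠ 0 ∨ g.coeff 0 * b.coeff 1 ≠ 0) :
    (matrixFiveTwo a g h b ^ 2).rank = 1 := by
  rw [matrixFiveTwo_sq ha₁]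
  refine le_antisymm ?_ ?_
  · refine rank_le_card_add_card_of_forall_eq_zero {Sum.inl 4} ∅ ?_
    rintro (i | i) hi (j | j) - <;> fin_cases i <;> fin_cases j <;> simp_all
  · rcases hne with hne | hne
    · exact one_le_rank_of_apply_ne_zero (i := .inl 4) (j := .inl 0) (by simpa [hh₀] using hne)
    · exact one_le_rank_of_apply_ne_zero (i := .inl 4) (j := .inr 0) (by simpa using hne)

lemma rank_matrixFiveTwo_cube (ha₁ : a.coeff 1 = 0) (hh₀ : h.coeff 0 = 0) :
    (matrixFiveTwo a g h b ^ 3).rank = 0 := by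
  have hcube : matrixFiveTwo a g h b ^ 3 = 0 := by
    rw [pow_succ, matrixFiveTwo_sq ha₁, matrixFiveTwo, Matrix.fromBlocks_multiply]
    ext (i | i) (j | j) <;> fin_cases i <;> fin_cases j <;> simp [ha₁, hh₀]
  rw [hcube, Matrix.rank_zero]

lemma rank_matrixFiveTwo_of_coeff_two_ne_zero (ha₁ : a.coeff 1 = 0) (hb₁ : b.coeff 1 = 0)
    (hh₀ : h.coeff 0 = 0) (ha₂ : a.coeff 2 ≠ 0) : (matrixFiveTwo a g h b).rank = 3 := by
  refine le_antisymm ?_ ?_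
  · refine rank_le_card_add_card_of_forall_eq_zero {Sum.inl 3, Sum.inl 4} {.inl 0} ?_
    rintro (i | i) hi (j | j) hj <;> fin_cases i <;> fin_cases j <;> simp_all [matrixFiveTwo]
  · have hminor : (matrixFiveTwo a g h b).submatrix ![.inl 2, .inl 3, .inl 4]
        ![.inl 0, .inl 1, .inl 2] =
          !![a.coeff 2, 0, 0; a.coeff 3, a.coeff 2, 0; a.coeff 4, a.coeff 3, a.coeff 2] := by
      ext i j
      fin_cases i <;> fin_cases j <;> simp [matrixFiveTwo, ha₁]
    exact card_le_rank_of_submatrix_eq hminor (by simpa [Matrix.det_fin_three] using ha₂)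

lemma rank_matrixFiveTwo_of_coeff_zero_ne_zero (ha₁ : a.coeff 1 = 0) (ha₂ : a.coeff 2 = 0)
    (hh₀ : h.coeff 0 = 0) (hg₀ : g.coeff 0 ≠ 0)
    (hne : a.coeff 3 * b.coeff 1 - g.coeff 0 * h.coeff 1 ≠ 0) :
    (matrixFiveTwo a g h b).rank = 3 := by
  refine le_antisymm ?_ ?_
  · refine rank_le_card_add_card_of_forall_eq_zero {Sum.inl 3, Sum.inl 4, Sum.inr 1} ∅ ?_
    rintro (i | i) hi (j | j) - <;> fin_cases i <;> fin_cases j <;> simp_all [matrixFiveTwo]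
  · have hminor : (matrixFiveTwo a g h b).submatrix ![.inl 3, .inl 4, .inr 1]
        ![.inl 0, .inr 0, .inr 1] =
          !![a.coeff 3, g.coeff 0, 0;
             a.coeff 4, g.coeff 1, g.coeff 0;
             h.coeff 1, b.coeff 1, 0] := by
      ext i j
      fin_cases i <;> fin_cases j <;> simp [matrixFiveTwo]
    have hdet : Matrix.det !![a.coeff 3, g.coeff 0, 0;
        a.coeff 4, g.coeff 1, g.coeff 0;
        h.coeff 1, b.coeff 1, 0] =
          -g.coeff 0 * (a.coeff 3 * b.coeff 1 - g.coeff 0 * h.coeff 1) := by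
      simp only [Matrix.det_fin_three, Matrix.of_apply, Matrix.cons_val', Matrix.cons_val]
      ring
    exact card_le_rank_of_submatrix_eq hminor
      (hdet.trans_ne (mul_ne_zero (neg_ne_zero.2 hg₀) hne))

lemma jordanTypeIs_Mmap_five_three_iff (ha : a.coeff 0 = 0) (hb : b.coeff 0 = 0) :
    JordanTypeIs F (Mmap F 5 3 (by norm_num) a g h b) {3, 2, 1, 1} ↔
      (matrixFiveTwo a g h b).rank = 3 ∧ (matrixFiveTwo a g h b ^ 2).rank = 1 ∧
        (matrixFiveTwo a g h b ^ 3).rank = 0 := by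
  rw [← toMatrix_Mmap_five_three ha hb]
  exact jordanTypeIs_three_two_one_one_iff (pairBasis F 5 3) _ rfl

lemma coeff_relations_of_jordanTypeIs (ha : a.coeff 0 = 0) (hb : b.coeff 0 = 0)
    (hJ : JordanTypeIs F (Mmap F 5 3 (by norm_num) a g h b) {3, 2, 1, 1}) :
    a.coeff 1 = 0 ∧ a.coeff 2 * b.coeff 1 = 0 ∧ g.coeff 0 * h.coeff 0 = 0 := by
  obtain ⟨h₁, h₂, h₃⟩ := (jordanTypeIs_Mmap_five_three_iff ha hb).1 hJ
  have ha₁ := coeff_one_eq_zero_of_rank_cube h₃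
  have hgh := mul_coeff_zero_eq_zero_of_rank_sq ha₁ h₂
  exact ⟨ha₁, mul_coeff_one_eq_zero_of_rank ha₁ hgh h₁, hgh⟩

lemma jordanTypeIs_of_coeff_two_ne_zero (ha : a.coeff 0 = 0) (hb : b.coeff 0 = 0)
    (ha₁ : a.coeff 1 = 0) (hb₁ : b.coeff 1 = 0) (hh₀ : h.coeff 0 = 0) (ha₂ : a.coeff 2 ≠ 0)
    (hne : a.coeff 2 * a.coeff 2 + g.coeff 0 * h.coeff 1 ≠ 0) :
    JordanTypeIs F (Mmap F 5 3 (by norm_num) a g h b) {3, 2, 1, 1} :=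
  (jordanTypeIs_Mmap_five_three_iff ha hb).2
    ⟨rank_matrixFiveTwo_of_coeff_two_ne_zero ha₁ hb₁ hh₀ ha₂,
      rank_matrixFiveTwo_sq ha₁ hh₀ (.inl hne), rank_matrixFiveTwo_cube ha₁ hh₀⟩

lemma jordanTypeIs_of_coeff_zero_ne_zero (ha : a.coeff 0 = 0) (hb : b.coeff 0 = 0)
    (ha₁ : a.coeff 1 = 0) (ha₂ : a.coeff 2 = 0) (hh₀ : h.coeff 0 = 0) (hg₀ : g.coeff 0 ≠ 0)
    (hb₁ : b.coeff 1 ≠ 0) (hne : a.coeff 3 * b.coeff 1 - g.coeff 0 * h.coeff 1 ≠ 0) :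
    JordanTypeIs F (Mmap F 5 3 (by norm_num) a g h b) {3, 2, 1, 1} :=
  (jordanTypeIs_Mmap_five_three_iff ha hb).2
    ⟨rank_matrixFiveTwo_of_coeff_zero_ne_zero ha₁ ha₂ hh₀ hg₀ hne,
      rank_matrixFiveTwo_sq ha₁ hh₀ (.inr (mul_ne_zero hg₀ hb₁)), rank_matrixFiveTwo_cube ha₁ hh₀⟩

end FiveTwo

section Coordinates

variable {F : Type*} [Field F] {u r : ℕ} (x : Vars u r → F)

lemma coeff_sum_C_mul_X_pow {n : ℕ} (c : Fin n → F) (i : Fin n) :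
    (∑ j : Fin n, C (c j) * X ^ (j : ℕ)).coeff i = c i := by
  simp [finsetSum_coeff, coeff_X_pow, ← Fin.ext_iff]

lemma sum_C_mul_X_pow_succ {n : ℕ} (c : Fin n → F) :
    ∑ j : Fin n, C (c j) * X ^ ((j : ℕ) + 1) = (∑ j : Fin n, C (c j) * X ^ (j : ℕ)) * X := by
  simp only [Finset.sum_mul, mul_assoc, pow_succ]

lemma coeff_zero_paOf : (paOf F u r x).coeff 0 = 0 := by
  rw [paOf, sum_C_mul_X_pow_succ, mul_coeff_zero, coeff_X_zero, mul_zero]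

lemma coeff_succ_paOf (i : Fin (u - 1)) : (paOf F u r x).coeff (i + 1) = x (.inl i) := by
  rw [paOf, sum_C_mul_X_pow_succ, coeff_mul_X, coeff_sum_C_mul_X_pow]

lemma coeff_zero_pbOf : (pbOf F u r x).coeff 0 = 0 := by
  rw [pbOf, sum_C_mul_X_pow_succ, mul_coeff_zero, coeff_X_zero, mul_zero]

lemma coeff_succ_pbOf (i : Fin (u - r - 1)) :
    (pbOf F u r x).coeff (i + 1) = x (.inr (.inl i)) := by
  rw [pbOf, sum_C_mul_X_pow_succ, coeff_mul_X, coeff_sum_C_mul_X_pow]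

lemma coeff_pgOf_s18 (i : Fin (u - r)) : (pgOf F u r x).coeff i = x (.inr (.inr (.inl i))) :=
  coeff_sum_C_mul_X_pow _ i

lemma coeff_phOf_s18 (i : Fin (u - r)) : (phOf F u r x).coeff i = x (.inr (.inr (.inr i))) :=
  coeff_sum_C_mul_X_pow _ i

/-- The set of points `x` at which `M_x` has Jordan type `P`. -/
def jordanLocus (F : Type*) [Field F] {u r : ℕ} (hru : r ≤ u) (P : Multiset ℕ) :
    Set (Vars u r → F) :=
  {x | JordanTypeIs F (Mx F u r hru x) P}

/-- The involution of the coordinates that exchanges `g_i` and `h_i`. -/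
def swapGH : Vars u r → Vars u r :=
  Sum.map id (Sum.map id Sum.swap)

lemma swapGH_comp_swapGH : (swapGH : Vars u r → Vars u r) ∘ swapGH = id := by
  simp [swapGH, Sum.map_comp_map]

lemma comp_swapGH_mem_jordanLocus_iff {hru : r ≤ u} {P : Multiset ℕ} :
    x ∘ swapGH ∈ jordanLocus F hru P ↔ x ∈ jordanLocus F hru P :=
  jordanTypeIs_Mmap_swap hru _ _ _ _ P

lemma coordSubspace_image_swapGH_subset_zClosure {hru : r ≤ u} {P : Multiset ℕ}
    {I : Finset (Vars u r)} (hI : coordSubspace F I ⊆ zClosure F u r (jordanLocus F hru P)) :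
    coordSubspace F (I.image swapGH) ⊆ zClosure F u r (jordanLocus F hru P) := by
  intro x hx
  have hswap : x ∘ swapGH ∈ coordSubspace F I := fun i hi ↦ hx _ (Finset.mem_image_of_mem _ hi)
  have hmem := comp_mem_zClosure swapGH
    (fun y hy ↦ (comp_swapGH_mem_jordanLocus_iff y).2 hy) (hI hswap)
  rwa [Function.comp_assoc, swapGH_comp_swapGH] at hmem

end Coordinates

section Components

namespace Coordinate

/-- The coordinate `a_1` of `F^9`. -/
abbrev a₁ : Vars 5 3 := .inl 0

/-- The coordinate `a_2` of `F^9`. -/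
abbrev a₂ : Vars 5 3 := .inl 1

/-- The coordinate `a_3` of `F^9`. -/
abbrev a₃ : Vars 5 3 := .inl 2

/-- The coordinate `b_1` of `F^9`. -/
abbrev b₁ : Vars 5 3 := .inr (.inl 0)

/-- The coordinate `g_0` of `F^9`. -/
abbrev g₀ : Vars 5 3 := .inr (.inr (.inl 0))

/-- The coordinate `h_0` of `F^9`. -/
abbrev h₀ : Vars 5 3 := .inr (.inr (.inr 0))

/-- The coordinate `h_1` of `F^9`. -/
abbrev h₁ : Vars 5 3 := .inr (.inr (.inr 1))

end Coordinate

open Coordinate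

variable {F : Type*} [Field F] (x : Vars 5 3 → F)

lemma coeff_one_paOf : (paOf F 5 3 x).coeff 1 = x a₁ := coeff_succ_paOf x 0

lemma coeff_two_paOf : (paOf F 5 3 x).coeff 2 = x a₂ := coeff_succ_paOf x 1

lemma coeff_three_paOf : (paOf F 5 3 x).coeff 3 = x a₃ := coeff_succ_paOf x 2

lemma coeff_one_pbOf : (pbOf F 5 3 x).coeff 1 = x b₁ := coeff_succ_pbOf x 0

lemma coeff_zero_pgOf : (pgOf F 5 3 x).coeff 0 = x g₀ := coeff_pgOf_s18 x 0

lemma coeff_zero_phOf : (phOf F 5 3 x).coeff 0 = x h₀ := coeff_phOf_s18 x 0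

lemma coeff_one_phOf : (phOf F 5 3 x).coeff 1 = x h₁ := coeff_phOf_s18 x 1

variable {x}

lemma eq_zero_of_mem_jordanLocus (hx : x ∈ jordanLocus F (by norm_num) {3, 2, 1, 1}) :
    x a₁ = 0 ∧ x a₂ * x b₁ = 0 ∧ x g₀ * x h₀ = 0 := by
  have hcoeff := coeff_relations_of_jordanTypeIs (coeff_zero_paOf x) (coeff_zero_pbOf x) hx
  rwa [coeff_one_paOf, coeff_two_paOf, coeff_one_pbOf, coeff_zero_pgOf, coeff_zero_phOf] at hcoeff

lemma mem_jordanLocus_of_apply_a₂_ne_zero (ha₁ : x a₁ = 0) (hb₁ : x b₁ = 0) (hh₀ : x h₀ = 0)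
    (ha₂ : x a₂ ≠ 0) (hne : x a₂ * x a₂ + x g₀ * x h₁ ≠ 0) :
    x ∈ jordanLocus F (by norm_num) {3, 2, 1, 1} := by
  apply jordanTypeIs_of_coeff_two_ne_zero (coeff_zero_paOf x) (coeff_zero_pbOf x) <;>
    simpa only [coeff_one_paOf, coeff_two_paOf, coeff_one_pbOf, coeff_zero_pgOf, coeff_zero_phOf,
      coeff_one_phOf]

lemma mem_jordanLocus_of_apply_g₀_ne_zero (ha₁ : x a₁ = 0) (ha₂ : x a₂ = 0) (hh₀ : x h₀ = 0)
    (hg₀ : x g₀ ≠ 0) (hb₁ : x b₁ ≠ 0) (hne : x a₃ * x b₁ - x g₀ * x h₁ ≠ 0) :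
    x ∈ jordanLocus F (by norm_num) {3, 2, 1, 1} := by
  apply jordanTypeIs_of_coeff_zero_ne_zero (coeff_zero_paOf x) (coeff_zero_pbOf x) <;>
    simpa only [coeff_one_paOf, coeff_two_paOf, coeff_three_paOf, coeff_one_pbOf, coeff_zero_pgOf,
      coeff_zero_phOf, coeff_one_phOf]

/-- For each irreducible component of the closure of the Jordan locus of `(3,2,1,1)`, the set of
coordinates that vanish on it. -/
def vanishingCoords : Finset (Finset (Vars 5 3)) :=
  {{a₁, a₂, g₀}, {a₁, a₂, h₀}, {a₁, b₁, g₀}, {a₁, b₁, h₀}}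

lemma mem_biUnion_coordSubspace_iff : x ∈ ⋃ I ∈ vanishingCoords, coordSubspace F I ↔
    x a₁ = 0 ∧ x a₂ * x b₁ = 0 ∧ x g₀ * x h₀ = 0 := by
  simp only [vanishingCoords, Finset.mem_insert, Finset.mem_singleton, Set.mem_iUnion,
    exists_prop, exists_eq_or_imp, exists_eq_left, coordSubspace, Set.mem_ofPred_eq,
    forall_eq_or_imp, forall_eq, mul_eq_zero]
  tauto

lemma coordSubspace_a₁_b₁_h₀_subset_zClosure [Infinite F] :
    coordSubspace F {a₁, b₁, h₀} ⊆
      zClosure F 5 3 (jordanLocus F (by norm_num) {3, 2, 1, 1}) := by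
  refine (isZIrred_coordSubspace _).subset_zClosure_of_eval_ne_zero
    (f := .X a₂ * (.X a₂ * .X a₂ + .X g₀ * .X h₁)) ⟨Pi.single a₂ 1, ?_, ?_⟩ fun x hx hf ↦ ?_
  · simp [coordSubspace]
  · simp
  · simp only [map_mul, map_add, MvPolynomial.eval_X] at hf
    obtain ⟨ha₂, hne⟩ := mul_ne_zero_iff.1 hf
    exact mem_jordanLocus_of_apply_a₂_ne_zero (hx _ (by decide)) (hx _ (by decide))
      (hx _ (by decide)) ha₂ hne

lemma coordSubspace_a₁_a₂_h₀_subset_zClosure [Infinite F] :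
    coordSubspace F {a₁, a₂, h₀} ⊆
      zClosure F 5 3 (jordanLocus F (by norm_num) {3, 2, 1, 1}) := by
  refine (isZIrred_coordSubspace _).subset_zClosure_of_eval_ne_zero
    (f := .X g₀ * (.X b₁ * (.X a₃ * .X b₁ - .X g₀ * .X h₁)))
    ⟨Pi.single a₃ 1 + Pi.single b₁ 1 + Pi.single g₀ 1, ?_, ?_⟩ fun x hx hf ↦ ?_
  · simp [coordSubspace]
  · simp
  · simp only [map_mul, map_sub, MvPolynomial.eval_X] at hf
    obtain ⟨hg₀, hb₁, hne⟩ : x g₀ ≠ 0 ∧ x b₁ ≠ 0 ∧ _ := by simpa only [mul_ne_zero_iff] using hf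
    exact mem_jordanLocus_of_apply_g₀_ne_zero (hx _ (by decide)) (hx _ (by decide))
      (hx _ (by decide)) hg₀ hb₁ hne

lemma zClosure_jordanLocus [Infinite F] :
    zClosure F 5 3 (jordanLocus F (by norm_num) {3, 2, 1, 1}) =
      ⋃ I ∈ vanishingCoords, coordSubspace F I := by
  refine Set.Subset.antisymm (fun x hx ↦ ?_) (Set.iUnion₂_subset fun I hI ↦ ?_)
  · rw [mem_zClosure_iff] at hx
    rw [mem_biUnion_coordSubspace_iff]
    have ha₁ := hx (.X a₁) fun y hy ↦ by simpa using (eq_zero_of_mem_jordanLocus hy).1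
    have hab := hx (.X a₂ * .X b₁) fun y hy ↦ by simpa using (eq_zero_of_mem_jordanLocus hy).2.1
    have hgh := hx (.X g₀ * .X h₀) fun y hy ↦ by simpa using (eq_zero_of_mem_jordanLocus hy).2.2
    simp only [map_mul, MvPolynomial.eval_X] at ha₁ hab hgh
    exact ⟨ha₁, hab, hgh⟩
  · simp only [vanishingCoords, Finset.mem_insert, Finset.mem_singleton] at hI
    rcases hI with rfl | rfl | rfl | rfl
    · exact coordSubspace_image_swapGH_subset_zClosure coordSubspace_a₁_a₂_h₀_subset_zClosure
    · exact coordSubspace_a₁_a₂_h₀_subset_zClosure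
    · exact coordSubspace_image_swapGH_subset_zClosure coordSubspace_a₁_b₁_h₀_subset_zClosure
    · exact coordSubspace_a₁_b₁_h₀_subset_zClosure

lemma isZComponent_coordSubspace [Infinite F] {I : Finset (Vars 5 3)} (hI : I ∈ vanishingCoords) :
    IsZComponent F 5 3 (⋃ I ∈ vanishingCoords, coordSubspace F I) (coordSubspace F I) := by
  have hanti : ∀ I ∈ vanishingCoords, ∀ J ∈ vanishingCoords, J ⊆ I → I = J := by decide
  exact isZComponent_biUnion vanishingCoords (fun I _ ↦ isZIrred_coordSubspace I)
    (fun I hI J hJ hIJ ↦ hanti I hI J hJ (coordSubspace_subset_iff.1 hIJ)) hI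

lemma setOf_a₁_b₁_eq_zero_ssubset_biUnion_coordSubspace :
    {x : Vars 5 3 → F | x a₁ = 0 ∧ x b₁ = 0 ∧ x g₀ * x h₀ = 0} ⊂
      ⋃ I ∈ vanishingCoords, coordSubspace F I := by
  rw [Set.ssubset_iff_exists]
  refine ⟨fun x ⟨ha₁, hb₁, hgh⟩ ↦ mem_biUnion_coordSubspace_iff.2 ⟨ha₁, ?_, hgh⟩,
    Pi.single b₁ 1, ?_, ?_⟩
  · exact mul_eq_zero_of_right _ hb₁
  · rw [mem_biUnion_coordSubspace_iff]
    simp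
  · simp

end Components

/-- For `Q = (5,2)`, let `Z` be the Zariski closure of the locus of
points `x` with Jordan type of `M_x` equal to `(3,2,1,1)`. Then
`{a_1 = 0, b_1 = 0, g_0 h_0 = 0}` is strictly contained in `Z`, `Z` is not irreducible,
and `Z` has at least three irreducible components. -/
theorem statement18 (F : Type*) [Field F] [Infinite F]
    (Z : Set (Vars 5 3 → F))
    (hZ : Z = zClosure F 5 3
      {x | JordanTypeIs F (Mx F 5 3 (by norm_num) x) ({3, 2, 1, 1} : Multiset ℕ)}) :
    {x : Vars 5 3 → F |
        x (Sum.inl ⟨0, by norm_num⟩) = 0 ∧ x (Sum.inr (Sum.inl ⟨0, by norm_num⟩)) = 0 ∧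
          x (Sum.inr (Sum.inr (Sum.inl ⟨0, by norm_num⟩))) *
            x (Sum.inr (Sum.inr (Sum.inr ⟨0, by norm_num⟩))) = 0} ⊂ Z ∧
    ¬ IsZIrred F 5 3 Z ∧
    ∃ C₁ C₂ C₃ : Set (Vars 5 3 → F), C₁ ≠ C₂ ∧ C₁ ≠ C₃ ∧ C₂ ≠ C₃ ∧
      IsZComponent F 5 3 Z C₁ ∧ IsZComponent F 5 3 Z C₂ ∧ IsZComponent F 5 3 Z C₃ := by
  obtain rfl : Z = ⋃ I ∈ vanishingCoords, coordSubspace F I := hZ.trans zClosure_jordanLocus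
  obtain ⟨I, hI, J, hJ, K, hK, hIJ, hIK, hJK⟩ :=
    Finset.two_lt_card.1 (show 2 < vanishingCoords.card by decide)
  have hcomp {I} (hI : I ∈ vanishingCoords) := isZComponent_coordSubspace (F := F) hI
  refine ⟨setOf_a₁_b₁_eq_zero_ssubset_biUnion_coordSubspace, fun hirr ↦ ?_,
    coordSubspace F I, coordSubspace F J, coordSubspace F K, coordSubspace_injective.ne hIJ,
    coordSubspace_injective.ne hIK, coordSubspace_injective.ne hJK, hcomp hI, hcomp hJ, hcomp hK⟩
  have heq : coordSubspace F I = coordSubspace F J :=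
    ((hcomp hI).eq_of_isZIrred hirr).trans ((hcomp hJ).eq_of_isZIrred hirr).symm
  exact hIJ (coordSubspace_injective heq)
end
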